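/- arXiv:1408.5537 — 3 statements merged into one kernel-verified Lean document; each statement's English description precedes it below -/
import Mathlib

section
/- Let b > 0, γ = 1 + 16b/3, and let ω = (ω₀, ω₁) ∈ Ω. Let v : ℝ → ℂ be differentiable with v, v' square-integrable, and suppose the first derivative of the map t ↦ K_ω(φ_ω + t·v) at t = 0 vanishes. Then the second derivative of the map t ↦ S_ω(φ_ω + t·v) at t = 0 is nonnegative. -/
/-!
Write `φ = ψ exp (iθ)` with `ψ = ˜φ_ω` and `θ' = ω₁ / 2 - ψ² / 4`, and let `Q` be the second
variation of `S_ω` at `φ`. Along `t ↦ φ + t v` both `K_ω` and `S_ω` are integrals of polynomials in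
`t` of degree six with integrable coefficients (`expansion`), so the derivatives in the theorem are
`∫ c1` for `K_ω` and `Q(v) = 2 ∫ c2` for `S_ω`, where `c1`, `c2` are the coefficients of `t`, `t²`.

In the moving frame `v = (h + ik) exp (iθ)` the first variation of `S_ω` has density `(ψ' h)'`, so
it vanishes (`integral_c1_eq_zero`). The density of `Q` is
`h'² + W h² + (k' + ψ² h / 2)² - ψ ψ' h k + V k²`, where `ψ'' = V ψ` and `(ψ')'' = W ψ'`.
With `q = ψ' / ψ` and `p = ψ'' / ψ'` this equals
`(h' - p h)² + (k' - q k + ψ² h / 2)² + (p h² + q k²)'` away from the origin, the only zero of `ψ'`.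
If `h 0 = 0`, then `p h² + q k²` is continuous on the line and vanishes at `±∞`, hence `Q(v) ≥ 0`
(`integral_c2_nonneg`).

For general `v`, put `s = h 0 / ψ 0`. Since `K(u) = S'(u)u`, the assumption `K'(φ)v = 0` and
`S'(φ) = 0` say that `φ` and `v` are `Q`-orthogonal, so `Q(v) = Q(v - sφ) - s² Q(φ)` (`c2_polar`).
The first term is nonnegative by the choice of `s`, and `Q(φ) = -2 L(φ) - 2b ‖φ‖₆⁶ ≤ 0`
(`integral_c2_self_nonpos`), since the density of `L` is pointwise nonnegative on `Ω`.
-/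

open MeasureTheory

noncomputable section

/-- γ = 1 + 16b/3 -/
def gam (b : ℝ) : ℝ := 1 + 16 * b / 3

/-- The real-valued profile ˜φ_ω. -/
def phit (b ω₀ ω₁ x : ℝ) : ℝ :=
  Real.sqrt (2 * (4 * ω₀ - ω₁ ^ 2) /
    (-ω₁ + Real.sqrt (ω₁ ^ 2 + gam b * (4 * ω₀ - ω₁ ^ 2)) *
      Real.cosh (Real.sqrt (4 * ω₀ - ω₁ ^ 2) * x)))

/-- The complex-valued solitary wave profile φ_ω. -/
def phi (b ω₀ ω₁ : ℝ) (x : ℝ) : ℂ :=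
  (phit b ω₀ ω₁ x : ℂ) *
    Complex.exp (Complex.I * (ω₁ / 2) * x -
      (Complex.I / 4) * ((∫ η in Set.Iic x, (phit b ω₀ ω₁ η) ^ 2) : ℝ))

/-- Q₀(v) = (1/2)∫|v|². -/
def Q0 (v : ℝ → ℂ) : ℝ := (1 / 2) * ∫ x : ℝ, ‖v x‖ ^ 2

/-- Q₁(v) = (1/2) Re ∫ i v' conj v. -/
def Q1 (v : ℝ → ℂ) : ℝ :=
  (1 / 2) * (∫ x : ℝ, Complex.I * deriv v x * (starRingEnd ℂ) (v x)).re

/-- P(v) = Re ∫ i |v|² v' conj v. -/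
def Pfun (v : ℝ → ℂ) : ℝ :=
  (∫ x : ℝ, Complex.I * (‖v x‖ : ℂ) ^ 2 * deriv v x * (starRingEnd ℂ) (v x)).re

/-- The energy E. -/
def Efun (b : ℝ) (v : ℝ → ℂ) : ℝ :=
  (1 / 2) * (∫ x : ℝ, ‖deriv v x‖ ^ 2) - (1 / 4) * Pfun v -
    (b / 6) * ∫ x : ℝ, ‖v x‖ ^ 6

/-- L_ω(v). -/
def Lfun (ω₀ ω₁ : ℝ) (v : ℝ → ℂ) : ℝ :=
  (∫ x : ℝ, ‖deriv v x‖ ^ 2) + ω₀ * (∫ x : ℝ, ‖v x‖ ^ 2) +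
    ω₁ * (∫ x : ℝ, Complex.I * deriv v x * (starRingEnd ℂ) (v x)).re

/-- The action S_ω. -/
def Sfun (b ω₀ ω₁ : ℝ) (v : ℝ → ℂ) : ℝ :=
  (1 / 2) * Lfun ω₀ ω₁ v - (1 / 4) * Pfun v - (b / 6) * ∫ x : ℝ, ‖v x‖ ^ 6

/-- The Nehari functional K_ω. -/
def Kfun (b ω₀ ω₁ : ℝ) (v : ℝ → ℂ) : ℝ :=
  Lfun ω₀ ω₁ v - Pfun v - b * ∫ x : ℝ, ‖v x‖ ^ 6

/-- v ∈ H¹(ℝ): v differentiable with v and v' square-integrable. -/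
def H1 (v : ℝ → ℂ) : Prop :=
  Differentiable ℝ v ∧ Integrable (fun x : ℝ => ‖v x‖ ^ 2) ∧
    Integrable (fun x : ℝ => ‖deriv v x‖ ^ 2)

/-- The function g from Remark 1. -/
def gfun (b ξ : ℝ) : ℝ :=
  (2 * (gam b - 1) / ξ) * Real.arctan ((1 + Real.sqrt (1 + ξ ^ 2)) / ξ)

open Filter Topology

namespace Stmt16

/-! ### The real bilinear forms `Re (a z̄)` and `Re (i a z̄)` -/

/-- The real part of `a z̄`. -/
def R (a z : ℂ) : ℝ := a.re * z.re + a.im * z.im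

/-- The real part of `i a z̄`. -/
def M (a z : ℂ) : ℝ := a.re * z.im - a.im * z.re

lemma R_self (z : ℂ) : R z z = ‖z‖ ^ 2 := by
  rw [Complex.sq_norm, Complex.normSq_apply, R]

lemma abs_M_le (a z : ℂ) : |M a z| ≤ ‖a‖ ^ 2 + ‖z‖ ^ 2 := by
  rw [← R_self, ← R_self, abs_le]
  unfold R M
  constructor <;>
    nlinarith [sq_nonneg (a.re + z.im), sq_nonneg (a.re - z.im), sq_nonneg (a.im + z.re),
      sq_nonneg (a.im - z.re), sq_nonneg a.re, sq_nonneg a.im, sq_nonneg z.re, sq_nonneg z.im]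

lemma abs_R_le (a z : ℂ) : |R a z| ≤ ‖a‖ ^ 2 + ‖z‖ ^ 2 := by
  rw [← R_self, ← R_self, abs_le]
  unfold R
  constructor <;>
    nlinarith [sq_nonneg (a.re + z.re), sq_nonneg (a.re - z.re), sq_nonneg (a.im + z.im),
      sq_nonneg (a.im - z.im), sq_nonneg a.re, sq_nonneg a.im, sq_nonneg z.re, sq_nonneg z.im]

lemma R_mul_unit {e : ℂ} (he : e.re ^ 2 + e.im ^ 2 = 1) (a z : ℂ) :
    R (a * e) (z * e) = R a z := by
  simp only [R, Complex.mul_re, Complex.mul_im]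
  linear_combination (a.re * z.re + a.im * z.im) * he

lemma M_mul_unit {e : ℂ} (he : e.re ^ 2 + e.im ^ 2 = 1) (a z : ℂ) :
    M (a * e) (z * e) = M a z := by
  simp only [M, Complex.mul_re, Complex.mul_im]
  linear_combination (a.re * z.im - a.im * z.re) * he

lemma hasDerivAt_re {f : ℝ → ℂ} {f' : ℂ} {x : ℝ} (h : HasDerivAt f f' x) :
    HasDerivAt (fun y => (f y).re) f'.re x :=
  (Complex.reCLM.hasFDerivAt (x := f x)).comp_hasDerivAt x h

lemma hasDerivAt_im {f : ℝ → ℂ} {f' : ℂ} {x : ℝ} (h : HasDerivAt f f' x) :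
    HasDerivAt (fun y => (f y).im) f'.im x :=
  (Complex.imCLM.hasFDerivAt (x := f x)).comp_hasDerivAt x h

lemma measurable_RM {f g : ℝ → ℂ} (hf : Measurable f) (hg : Measurable g) :
    Measurable (fun x => R (f x) (g x)) ∧ Measurable (fun x => M (f x) (g x)) := by
  have h1 := Complex.measurable_re.comp hf
  have h2 := Complex.measurable_im.comp hf
  have h3 := Complex.measurable_re.comp hg
  have h4 := Complex.measurable_im.comp hg
  exact ⟨(h1.mul h3).add (h2.mul h4), (h1.mul h4).sub (h2.mul h3)⟩

/-! ### Functions of class `H1` -/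

/-- The derivative of `‖u‖²` is integrable, being bounded by `2 (‖u‖² + ‖u'‖²)`; hence the integrable
function `‖u‖²` tends to `0` at both ends. -/
lemma H1.tendsto {u : ℝ → ℂ} (hu : H1 u) :
    Tendsto (fun x => ‖u x‖ ^ 2) atTop (𝓝 0) ∧ Tendsto (fun x => ‖u x‖ ^ 2) atBot (𝓝 0) := by
  obtain ⟨hd, h0, h1⟩ := hu
  have hder : ∀ x, HasDerivAt (fun x => ‖u x‖ ^ 2) (2 * R (deriv u x) (u x)) x := by
    intro x
    have e : (fun x => ‖u x‖ ^ 2) = fun x => (u x).re ^ 2 + (u x).im ^ 2 := by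
      funext y; rw [← R_self, R]; ring
    rw [e]
    have h := (hd x).hasDerivAt
    refine (((hasDerivAt_re h).pow 2).add ((hasDerivAt_im h).pow 2)).congr_deriv ?_
    simp only [R]; push_cast; ring
  have hint : Integrable (fun x => 2 * R (deriv u x) (u x)) := by
    refine Integrable.const_mul ?_ 2
    refine (h1.add h0).mono' (measurable_RM (measurable_deriv u)
      hd.continuous.measurable).1.aestronglyMeasurable (ae_of_all _ fun x => ?_)
    exact abs_R_le _ _
  exact ⟨tendsto_zero_of_hasDerivAt_of_integrableOn_Ioi (a := 0) (fun x _ => hder x)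
      hint.integrableOn h0.integrableOn,
    tendsto_zero_of_hasDerivAt_of_integrableOn_Iic (a := 0) (fun x _ => hder x)
      hint.integrableOn h0.integrableOn⟩

lemma H1.bounded {u : ℝ → ℂ} (hu : H1 u) : ∃ C, ∀ x, ‖u x‖ ^ 2 ≤ C := by
  obtain ⟨hT, hB⟩ := H1.tendsto hu
  have hc : Continuous (fun x => ‖u x‖ ^ 2) := hu.1.continuous.norm.pow 2
  obtain ⟨a, ha⟩ := eventually_atTop.1 (hT.eventually (ge_mem_nhds zero_lt_one))
  obtain ⟨a', ha'⟩ := eventually_atBot.1 (hB.eventually (ge_mem_nhds zero_lt_one))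
  obtain ⟨C, hC⟩ := (isCompact_Icc (a := a') (b := a)).bddAbove_image hc.continuousOn
  refine ⟨max C 1, fun x => ?_⟩
  rcases le_total a x with h | h
  · exact (ha x h).trans (le_max_right _ _)
  rcases le_total x a' with h' | h'
  · exact (ha' x h').trans (le_max_right _ _)
  · exact (hC ⟨x, ⟨h', h⟩, rfl⟩).trans (le_max_left _ _)

lemma deriv_add_mul {f g : ℝ → ℂ} (hf : Differentiable ℝ f) (hg : Differentiable ℝ g) (t x : ℝ) :
    deriv (fun x => f x + (t : ℂ) * g x) x = deriv f x + (t : ℂ) * deriv g x :=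
  ((hf x).hasDerivAt.add ((hg x).hasDerivAt.const_mul (t : ℂ))).deriv

lemma sq_norm_add_mul_le (a z : ℂ) (t : ℝ) :
    ‖a + (t : ℂ) * z‖ ^ 2 ≤ 2 * ‖a‖ ^ 2 + 2 * t ^ 2 * ‖z‖ ^ 2 := by
  rw [← R_self, ← R_self, ← R_self]
  simp only [R, Complex.add_re, Complex.add_im, Complex.re_ofReal_mul, Complex.im_ofReal_mul]
  nlinarith [sq_nonneg (a.re - t * z.re), sq_nonneg (a.im - t * z.im)]

lemma H1.add_mul {f g : ℝ → ℂ} (hf : H1 f) (hg : H1 g) (t : ℝ) :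
    H1 (fun x => f x + (t : ℂ) * g x) := by
  have hd : Differentiable ℝ (fun x => f x + (t : ℂ) * g x) :=
    hf.1.add (hg.1.const_mul (t : ℂ))
  refine ⟨hd, ?_, ?_⟩
  · refine ((hf.2.1.const_mul 2).add (hg.2.1.const_mul (2 * t ^ 2))).mono'
      (hd.continuous.norm.pow 2).aestronglyMeasurable (ae_of_all _ fun x => ?_)
    rw [Real.norm_of_nonneg (by positivity)]
    exact sq_norm_add_mul_le _ _ _
  · refine ((hf.2.2.const_mul 2).add (hg.2.2.const_mul (2 * t ^ 2))).mono'
      ((measurable_deriv _).norm.pow_const 2).aestronglyMeasurable (ae_of_all _ fun x => ?_)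
    rw [Real.norm_of_nonneg (by positivity), deriv_add_mul hf.1 hg.1]
    exact sq_norm_add_mul_le _ _ _

/-! ### The functionals as integrals of densities -/

/-- The density of `L_ω` at a function with value `u` and derivative `du`. -/
def Ldens (ω₀ ω₁ : ℝ) (u du : ℂ) : ℝ := R du du + ω₀ * R u u + ω₁ * M du u

/-- The density of `l • L_ω - p • P - n • ‖·‖₆⁶`, covering both `S_ω` (with `l = 1/2`, `p = 1/4`,
`n = b/6`) and `K_ω` (with `l = 1`, `p = 1`, `n = b`). -/
def dens (ω₀ ω₁ l p n : ℝ) (u u' : ℂ) : ℝ :=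
  l * Ldens ω₀ ω₁ u u' - p * (R u u * M u' u) - n * R u u ^ 3

lemma re_I_mul (a z : ℂ) : (Complex.I * a * (starRingEnd ℂ) z).re = M a z := by
  simp [M]; ring

lemma re_I_norm_mul (a z : ℂ) :
    (Complex.I * (‖z‖ : ℂ) ^ 2 * a * (starRingEnd ℂ) z).re = R z z * M a z := by
  have : Complex.I * (‖z‖ : ℂ) ^ 2 * a * (starRingEnd ℂ) z
      = ((‖z‖ ^ 2 : ℝ) : ℂ) * (Complex.I * a * (starRingEnd ℂ) z) := by push_cast; ring
  rw [this, Complex.re_ofReal_mul, re_I_mul, R_self]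

lemma norm_mul_le_sq (a z : ℂ) : ‖a‖ * ‖z‖ ≤ ‖a‖ ^ 2 + ‖z‖ ^ 2 := by
  nlinarith [sq_nonneg (‖a‖ - ‖z‖), sq_nonneg ‖a‖, sq_nonneg ‖z‖]

/-- All integrands occurring in `L_ω`, `P` and `‖·‖₆⁶` are integrable (`u` is bounded), so the real
parts in the definitions may be moved inside the integrals. -/
lemma H1.densities {u : ℝ → ℂ} (hu : H1 u) :
    (Integrable (fun x => R (deriv u x) (deriv u x)) ∧ Integrable (fun x => R (u x) (u x)) ∧
      Integrable (fun x => M (deriv u x) (u x))) ∧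
    (Integrable (fun x => R (u x) (u x) * M (deriv u x) (u x)) ∧
      Integrable (fun x => R (u x) (u x) ^ 3)) ∧
    (∫ x : ℝ, Complex.I * deriv u x * (starRingEnd ℂ) (u x)).re = ∫ x, M (deriv u x) (u x) ∧
    Pfun u = ∫ x, R (u x) (u x) * M (deriv u x) (u x) := by
  obtain ⟨C, hC⟩ := H1.bounded hu
  obtain ⟨hd, h0, h1⟩ := hu
  have hm := hd.continuous.measurable
  have hm' := measurable_deriv u
  have hmc : Measurable (fun x => (starRingEnd ℂ) (u x)) :=
    Complex.continuous_conj.measurable.comp hm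
  have hC0 : 0 ≤ C := (sq_nonneg _).trans (hC 0)
  have i1 : Integrable (fun x => Complex.I * deriv u x * (starRingEnd ℂ) (u x)) := by
    refine (h1.add h0).mono' ((measurable_const.mul hm').mul hmc).aestronglyMeasurable
      (ae_of_all _ fun x => ?_)
    simpa using norm_mul_le_sq (deriv u x) (u x)
  have i2 : Integrable (fun x => Complex.I * (‖u x‖ : ℂ) ^ 2 * deriv u x *
      (starRingEnd ℂ) (u x)) := by
    refine ((h1.add h0).const_mul C).mono' ?_ (ae_of_all _ fun x => ?_)
    · exact (((measurable_const.mul ((Complex.measurable_ofReal.comp hm.norm).pow_const 2)).mul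
        hm').mul hmc).aestronglyMeasurable
    · have := mul_le_mul (hC x) (norm_mul_le_sq (deriv u x) (u x)) (by positivity) hC0
      simpa [mul_assoc] using this
  have r1 : Integrable (fun x => M (deriv u x) (u x)) := by
    simpa only [re_I_mul, Complex.reCLM_apply] using Complex.reCLM.integrable_comp i1
  have r2 : Integrable (fun x => R (u x) (u x) * M (deriv u x) (u x)) := by
    simpa only [re_I_norm_mul, Complex.reCLM_apply] using Complex.reCLM.integrable_comp i2
  refine ⟨⟨by simpa only [R_self] using h1, by simpa only [R_self] using h0, r1⟩, ⟨r2, ?_⟩, ?_, ?_⟩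
  · simp only [R_self]
    refine (h0.const_mul (C ^ 2)).mono' ((hm.norm.pow_const 2).pow_const 3).aestronglyMeasurable
      (ae_of_all _ fun x => ?_)
    rw [Real.norm_of_nonneg (by positivity), pow_succ]
    exact mul_le_mul_of_nonneg_right (pow_le_pow_left₀ (by positivity) (hC x) 2) (by positivity)
  · rw [← Complex.reCLM_apply, ← Complex.reCLM.integral_comp_comm i1]
    simp only [re_I_mul, Complex.reCLM_apply]
  · rw [Pfun, ← Complex.reCLM_apply, ← Complex.reCLM.integral_comp_comm i2]
    simp only [re_I_norm_mul, Complex.reCLM_apply]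

lemma integral_add3 {f g h : ℝ → ℝ} (hf : Integrable f) (hg : Integrable g) (hh : Integrable h) :
    ∫ x, (f x + g x + h x) = (∫ x, f x) + (∫ x, g x) + ∫ x, h x := by
  have h1 : ∫ x, (f x + g x + h x) = (∫ x, (f x + g x)) + ∫ x, h x := integral_add (hf.add hg) hh
  rw [h1, integral_add hf hg]

lemma integral_sub3 {f g h : ℝ → ℝ} (hf : Integrable f) (hg : Integrable g) (hh : Integrable h) :
    ∫ x, (f x - g x - h x) = (∫ x, f x) - (∫ x, g x) - ∫ x, h x := by
  have h1 : ∫ x, (f x - g x - h x) = (∫ x, (f x - g x)) - ∫ x, h x := integral_sub (hf.sub hg) hh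
  rw [h1, integral_sub hf hg]

lemma H1.integral_Ldens {u : ℝ → ℂ} (hu : H1 u) (ω₀ ω₁ : ℝ) :
    Integrable (fun x => Ldens ω₀ ω₁ (u x) (deriv u x)) ∧
      Lfun ω₀ ω₁ u = ∫ x, Ldens ω₀ ω₁ (u x) (deriv u x) := by
  obtain ⟨⟨i1, i2, i3⟩, -, e1, -⟩ := H1.densities hu
  refine ⟨(i1.add (i2.const_mul ω₀)).add (i3.const_mul ω₁), ?_⟩
  simp only [Ldens, Lfun, e1]
  rw [integral_add3 i1 (i2.const_mul ω₀) (i3.const_mul ω₁), integral_const_mul,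
    integral_const_mul]
  simp only [R_self]

lemma integral_norm_six (u : ℝ → ℂ) : ∫ x, ‖u x‖ ^ 6 = ∫ x, R (u x) (u x) ^ 3 := by
  simp only [R_self, ← pow_mul]

lemma H1.integral_dens {u : ℝ → ℂ} (hu : H1 u) (ω₀ ω₁ l p n : ℝ) :
    Integrable (fun x => dens ω₀ ω₁ l p n (u x) (deriv u x)) ∧
      l * Lfun ω₀ ω₁ u - p * Pfun u - n * ∫ x, ‖u x‖ ^ 6 =
        ∫ x, dens ω₀ ω₁ l p n (u x) (deriv u x) := by
  obtain ⟨-, ⟨i1, i2⟩, -, e1⟩ := H1.densities hu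
  obtain ⟨i3, e3⟩ := H1.integral_Ldens hu ω₀ ω₁
  have j1 := i1.const_mul p
  have j2 := i2.const_mul n
  have j3 := i3.const_mul l
  refine ⟨(j3.sub j1).sub j2, ?_⟩
  simp only [dens, e1, e3, integral_norm_six]
  rw [integral_sub3 j3 j1 j2]
  simp only [integral_const_mul]

/-! ### Expansion of the functionals along a line -/

/-- A polynomial in `t` with function coefficients that is integrable for every `t` has integrable
coefficients: they are recovered from the values at `t = 0, …, 6` by inverting a Vandermonde matrix. -/
lemma integrable_coeff {c : Fin 7 → ℝ → ℝ}
    (h : ∀ t : ℝ, Integrable (fun x => ∑ j : Fin 7, t ^ (j : ℕ) * c j x)) (j : Fin 7) :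
    Integrable (c j) := by
  set V : Matrix (Fin 7) (Fin 7) ℝ := Matrix.vandermonde (fun i => ((i : ℕ) : ℝ)) with hV
  have hdet : IsUnit V.det := by
    rw [isUnit_iff_ne_zero, hV, Matrix.det_vandermonde_ne_zero_iff]
    intro a b hab
    exact Fin.ext (Nat.cast_injective (R := ℝ) hab)
  have e : c j = fun x => ∑ i, V⁻¹ j i * ∑ k : Fin 7, ((i : ℕ) : ℝ) ^ (k : ℕ) * c k x := by
    funext x
    have h1 : V⁻¹.mulVec (V.mulVec (fun k => c k x)) = fun k => c k x := by
      rw [Matrix.mulVec_mulVec, Matrix.nonsing_inv_mul _ hdet, Matrix.one_mulVec]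
    have := congrFun h1 j
    simp only [Matrix.mulVec, dotProduct, hV, Matrix.vandermonde_apply] at this
    exact this.symm
  rw [e]
  exact integrable_finsetSum _ fun i _ => (h _).const_mul _

/-- If `f t` is the integral of a polynomial in `t` of degree at most six, its first two derivatives
at `0` are read off from the coefficients. -/
lemma derivs_of_poly {c : Fin 7 → ℝ → ℝ} {f : ℝ → ℝ}
    (h : ∀ t : ℝ, Integrable (fun x => ∑ j : Fin 7, t ^ (j : ℕ) * c j x))
    (hf : ∀ t, f t = ∫ x, ∑ j : Fin 7, t ^ (j : ℕ) * c j x) :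
    deriv f 0 = ∫ x, c 1 x ∧ iteratedDeriv 2 f 0 = 2 * ∫ x, c 2 x := by
  have hi := integrable_coeff h
  set p : Polynomial ℝ := ∑ j : Fin 7, Polynomial.monomial (j : ℕ) (∫ x, c j x) with hp
  have hfp : f = fun t => p.eval t := by
    funext t
    rw [hf, integral_finsetSum _ fun j _ => (hi j).const_mul _, hp, Polynomial.eval_finsetSum]
    refine Finset.sum_congr rfl fun j _ => ?_
    rw [integral_const_mul, Polynomial.eval_monomial, mul_comm]
  have hd : deriv f = fun t => p.derivative.eval t := by
    funext t; rw [hfp]; exact p.deriv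
  refine ⟨?_, ?_⟩
  · rw [hd]
    simp [hp, Fin.sum_univ_succ, Polynomial.eval_monomial]
  · rw [iteratedDeriv_succ, iteratedDeriv_one, hd, Polynomial.deriv]
    simp [hp, Fin.sum_univ_succ, Polynomial.eval_monomial]
    ring_nf

/-- First-order coefficient in `t` of the density at `a + t z`. -/
def c1 (ω₀ ω₁ l p n : ℝ) (a a' z z' : ℂ) : ℝ :=
  l * (2 * R a' z' + 2 * ω₀ * R a z + ω₁ * (M a' z + M z' a)) -
    p * (R a a * (M a' z + M z' a) + 2 * R a z * M a' a) - 6 * n * R a a ^ 2 * R a z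

/-- Second-order coefficient in `t` of the density at `a + t z`. -/
def c2 (ω₀ ω₁ l p n : ℝ) (a a' z z' : ℂ) : ℝ :=
  l * (R z' z' + ω₀ * R z z + ω₁ * M z' z) -
    p * (R a a * M z' z + 2 * R a z * (M a' z + M z' a) + R z z * M a' a) -
    n * (3 * R a a ^ 2 * R z z + 12 * R a a * R a z ^ 2)

/-- All the coefficients of powers of `t` in the density at `a + t z` (with derivative `a' + t z'`). -/
def cAll (ω₀ ω₁ l p n : ℝ) (a a' z z' : ℂ) : Fin 7 → ℝ :=
  ![dens ω₀ ω₁ l p n a a', c1 ω₀ ω₁ l p n a a' z z', c2 ω₀ ω₁ l p n a a' z z',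
    -p * (2 * R a z * M z' z + R z z * (M a' z + M z' a)) -
      n * (12 * R a a * R a z * R z z + 8 * R a z ^ 3),
    -p * R z z * M z' z - n * (3 * R a a * R z z ^ 2 + 12 * R a z ^ 2 * R z z),
    -6 * n * R a z * R z z ^ 2, -n * R z z ^ 3]

lemma R_add_mul (a z a' z' : ℂ) (t : ℝ) : R (a + t * z) (a' + t * z') =
    R a a' + t * (R a z' + R z a') + t ^ 2 * R z z' := by
  simp only [R, Complex.add_re, Complex.add_im, Complex.re_ofReal_mul, Complex.im_ofReal_mul]
  ring

lemma M_add_mul (a z a' z' : ℂ) (t : ℝ) : M (a + t * z) (a' + t * z') =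
    M a a' + t * (M a z' + M z a') + t ^ 2 * M z z' := by
  simp only [M, Complex.add_re, Complex.add_im, Complex.re_ofReal_mul, Complex.im_ofReal_mul]
  ring

lemma R_comm (a z : ℂ) : R a z = R z a := by
  simp only [R]; ring

lemma dens_add_mul (ω₀ ω₁ l p n : ℝ) (a a' z z' : ℂ) (t : ℝ) :
    dens ω₀ ω₁ l p n (a + t * z) (a' + t * z') =
      ∑ j : Fin 7, t ^ (j : ℕ) * cAll ω₀ ω₁ l p n a a' z z' j := by
  simp only [Fin.sum_univ_succ, cAll]
  simp [dens, Ldens, c1, c2, R_add_mul, M_add_mul, R_comm z a, R_comm z' a']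
  ring

/-- Along `t ↦ φ + t v` the functional `l • L_ω - p • P - n • ‖·‖₆⁶` has first derivative `∫ c1` and
second derivative `2 ∫ c2` at `t = 0`; both coefficients are integrable. -/
lemma expansion {φ v : ℝ → ℂ} (hφ : H1 φ) (hv : H1 v) (ω₀ ω₁ l p n : ℝ) :
    (Integrable (fun x => c1 ω₀ ω₁ l p n (φ x) (deriv φ x) (v x) (deriv v x)) ∧
      Integrable (fun x => c2 ω₀ ω₁ l p n (φ x) (deriv φ x) (v x) (deriv v x))) ∧
    ∀ f : ℝ → ℝ, (∀ t, f t = l * Lfun ω₀ ω₁ (fun x => φ x + (t : ℂ) * v x) -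
        p * Pfun (fun x => φ x + (t : ℂ) * v x) - n * ∫ x, ‖φ x + (t : ℂ) * v x‖ ^ 6) →
      deriv f 0 = ∫ x, c1 ω₀ ω₁ l p n (φ x) (deriv φ x) (v x) (deriv v x) ∧
      iteratedDeriv 2 f 0 = 2 * ∫ x, c2 ω₀ ω₁ l p n (φ x) (deriv φ x) (v x) (deriv v x) := by
  set c : Fin 7 → ℝ → ℝ := fun j x => cAll ω₀ ω₁ l p n (φ x) (deriv φ x) (v x) (deriv v x) j
    with hc
  have key : ∀ t : ℝ, Integrable (fun x => ∑ j : Fin 7, t ^ (j : ℕ) * c j x) ∧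
      l * Lfun ω₀ ω₁ (fun x => φ x + (t : ℂ) * v x) -
        p * Pfun (fun x => φ x + (t : ℂ) * v x) - n * ∫ x, ‖φ x + (t : ℂ) * v x‖ ^ 6 =
        ∫ x, ∑ j : Fin 7, t ^ (j : ℕ) * c j x := by
    intro t
    have h := H1.integral_dens (H1.add_mul hφ hv t) ω₀ ω₁ l p n
    simpa only [deriv_add_mul hφ.1 hv.1, dens_add_mul] using h
  refine ⟨⟨integrable_coeff (fun t => (key t).1) 1, integrable_coeff (fun t => (key t).1) 2⟩,
    fun f hf => ?_⟩
  exact derivs_of_poly (fun t => (key t).1) (fun t => (hf t).trans (key t).2)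

/-! ### Pointwise identities for the coefficients -/

/-- Polarization: with `Q` the integral of `2 * c2` at `φ`, it reads
`Q(v) = Q(v - sφ) - s² Q(φ) + 2s (K'(φ)v - S'(φ)v)`. The cross term is computed from
`K(u) = S'(u)u`, whose derivative in direction `v` is `K'(φ)v = S''(φ)(φ, v) + S'(φ)v`. -/
lemma c2_polar (b ω₀ ω₁ s : ℝ) (a a' z z' : ℂ) :
    c2 ω₀ ω₁ (1 / 2) (1 / 4) (b / 6) a a' z z' =
      c2 ω₀ ω₁ (1 / 2) (1 / 4) (b / 6) a a' (z + ((-s : ℝ) : ℂ) * a) (z' + ((-s : ℝ) : ℂ) * a') -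
      s ^ 2 * c2 ω₀ ω₁ (1 / 2) (1 / 4) (b / 6) a a' a a' +
      s * (c1 ω₀ ω₁ 1 1 b a a' z z' - c1 ω₀ ω₁ (1 / 2) (1 / 4) (b / 6) a a' z z') := by
  simp only [c1, c2, R, M, Complex.add_re, Complex.add_im, Complex.re_ofReal_mul,
    Complex.im_ofReal_mul]
  ring

/-- Together with the Euler–Lagrange equation this shows that the second variation of `S_ω` is
nonpositive in the direction `φ` itself. -/
lemma c2_self (b ω₀ ω₁ : ℝ) (a a' : ℂ) :
    2 * c2 ω₀ ω₁ (1 / 2) (1 / 4) (b / 6) a a' a a' =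
      3 * c1 ω₀ ω₁ (1 / 2) (1 / 4) (b / 6) a a' a a' -
        2 * Ldens ω₀ ω₁ a a' - 2 * b * R a a ^ 3 := by
  simp only [c1, c2, Ldens, R, M]
  ring

lemma Ldens_nonneg {ω₀ ω₁ : ℝ} (hΩ : ω₁ ^ 2 < 4 * ω₀) (u u' : ℂ) : 0 ≤ Ldens ω₀ ω₁ u u' := by
  have e : Ldens ω₀ ω₁ u u' = (u'.re + ω₁ / 2 * u.im) ^ 2 + (u'.im - ω₁ / 2 * u.re) ^ 2 +
      (ω₀ - ω₁ ^ 2 / 4) * (u.re ^ 2 + u.im ^ 2) := by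
    simp only [Ldens, R, M]; ring
  rw [e]
  have : 0 ≤ ω₀ - ω₁ ^ 2 / 4 := by linarith
  positivity

/-- The potential `V` with `˜φ'' = V(˜φ²) ˜φ`, as a function of `s = ˜φ²`. -/
def Vpot (b ω₀ ω₁ s : ℝ) : ℝ := (4 * ω₀ - ω₁ ^ 2) / 4 + ω₁ / 2 * s - 3 * gam b / 16 * s ^ 2

/-- The potential of the linearization, with `(˜φ')'' = W(˜φ²) ˜φ'`, as a function of `s = ˜φ²`;
that is, `W(s) = V(s) + 2 s V'(s)`. -/
def Wpot (b ω₀ ω₁ s : ℝ) : ℝ :=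
  (4 * ω₀ - ω₁ ^ 2) / 4 + 3 * ω₁ / 2 * s - 15 * gam b / 16 * s ^ 2

/-- First variation of `S_ω` at `φ = ψ e` in direction `w e`, where `e = exp (iθ)` with
`θ' = ω₁ / 2 - ψ² / 4` and `ψ' = q ψ`: only the real part of `w` enters. -/
lemma c1_frame (b ω₀ ω₁ ψ q : ℝ) {e : ℂ} (he : e.re ^ 2 + e.im ^ 2 = 1) (w w' : ℂ) :
    c1 ω₀ ω₁ (1 / 2) (1 / 4) (b / 6) (ψ * e)
      ((q * ψ + Complex.I * (ω₁ / 2 - ψ ^ 2 / 4 : ℝ) * ψ) * e) (w * e)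
      ((w' + Complex.I * (ω₁ / 2 - ψ ^ 2 / 4 : ℝ) * w) * e) =
    ψ * q * w'.re + ψ * Vpot b ω₀ ω₁ (ψ ^ 2) * w.re := by
  simp only [c1, R_mul_unit he, M_mul_unit he]
  simp [R, M, Vpot, gam, -Complex.ofReal_sub]
  ring

/-- Second variation of `S_ω` at `φ = ψ e` in direction `w e`, with `e`, `q` as in `c1_frame`. -/
lemma c2_frame (b ω₀ ω₁ ψ q : ℝ) {e : ℂ} (he : e.re ^ 2 + e.im ^ 2 = 1) (w w' : ℂ) :
    2 * c2 ω₀ ω₁ (1 / 2) (1 / 4) (b / 6) (ψ * e)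
      ((q * ψ + Complex.I * (ω₁ / 2 - ψ ^ 2 / 4 : ℝ) * ψ) * e) (w * e)
      ((w' + Complex.I * (ω₁ / 2 - ψ ^ 2 / 4 : ℝ) * w) * e) =
    w'.re ^ 2 + Wpot b ω₀ ω₁ (ψ ^ 2) * w.re ^ 2 + (w'.im + ψ ^ 2 * w.re / 2) ^ 2 -
      ψ ^ 2 * q * w.re * w.im + Vpot b ω₀ ω₁ (ψ ^ 2) * w.im ^ 2 := by
  simp only [c2, R_mul_unit he, M_mul_unit he]
  simp [R, M, Vpot, Wpot, gam, -Complex.ofReal_sub]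
  ring

/-! ### The profile `˜φ_ω` and its phase -/

/-- The denominator of `˜φ_ω²`. -/
def Den (b ω₀ ω₁ x : ℝ) : ℝ :=
  -ω₁ + Real.sqrt (ω₁ ^ 2 + gam b * (4 * ω₀ - ω₁ ^ 2)) * Real.cosh (Real.sqrt (4 * ω₀ - ω₁ ^ 2) * x)

/-- The derivative of `Den`. -/
def Den' (b ω₀ ω₁ x : ℝ) : ℝ :=
  Real.sqrt (ω₁ ^ 2 + gam b * (4 * ω₀ - ω₁ ^ 2)) *
    (Real.sinh (Real.sqrt (4 * ω₀ - ω₁ ^ 2) * x) * Real.sqrt (4 * ω₀ - ω₁ ^ 2))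

/-- The logarithmic derivative `˜φ' / ˜φ`. -/
def qfun (b ω₀ ω₁ x : ℝ) : ℝ := -(Den' b ω₀ ω₁ x / (2 * Den b ω₀ ω₁ x))

section profile

variable {b ω₀ ω₁ : ℝ}

lemma gam_gt (hb : 0 < b) : 1 < gam b := by unfold gam; linarith

lemma abs_lt_rad (hb : 0 < b) (hΩ : ω₁ ^ 2 < 4 * ω₀) :
    |ω₁| < Real.sqrt (ω₁ ^ 2 + gam b * (4 * ω₀ - ω₁ ^ 2)) := by
  rw [← Real.sqrt_sq_eq_abs]
  have := gam_gt hb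
  exact Real.sqrt_lt_sqrt (sq_nonneg _) (by nlinarith)

lemma Den_ge (x : ℝ) :
    (Real.sqrt (ω₁ ^ 2 + gam b * (4 * ω₀ - ω₁ ^ 2)) - |ω₁|) *
      Real.cosh (Real.sqrt (4 * ω₀ - ω₁ ^ 2) * x) ≤ Den b ω₀ ω₁ x := by
  have h1 := Real.one_le_cosh (Real.sqrt (4 * ω₀ - ω₁ ^ 2) * x)
  have h2 := le_abs_self ω₁
  have h3 := abs_nonneg ω₁
  unfold Den
  nlinarith

lemma Den_pos (hb : 0 < b) (hΩ : ω₁ ^ 2 < 4 * ω₀) (x : ℝ) : 0 < Den b ω₀ ω₁ x :=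
  lt_of_lt_of_le (mul_pos (sub_pos.2 (abs_lt_rad hb hΩ)) (Real.cosh_pos _)) (Den_ge x)

lemma phit_sq (hb : 0 < b) (hΩ : ω₁ ^ 2 < 4 * ω₀) (x : ℝ) :
    phit b ω₀ ω₁ x ^ 2 = 2 * (4 * ω₀ - ω₁ ^ 2) / Den b ω₀ ω₁ x := by
  have h := Den_pos hb hΩ x
  have : 0 < 4 * ω₀ - ω₁ ^ 2 := by linarith
  exact Real.sq_sqrt (by unfold Den at h; positivity)

lemma phit_pos (hb : 0 < b) (hΩ : ω₁ ^ 2 < 4 * ω₀) (x : ℝ) : 0 < phit b ω₀ ω₁ x := by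
  have h := Den_pos hb hΩ x
  have : 0 < 4 * ω₀ - ω₁ ^ 2 := by linarith
  exact Real.sqrt_pos.2 (by unfold Den at h; positivity)

lemma hasDerivAt_Den (x : ℝ) : HasDerivAt (Den b ω₀ ω₁) (Den' b ω₀ ω₁ x) x := by
  have h := (((hasDerivAt_id x).const_mul (Real.sqrt (4 * ω₀ - ω₁ ^ 2))).cosh.const_mul
    (Real.sqrt (ω₁ ^ 2 + gam b * (4 * ω₀ - ω₁ ^ 2)))).const_add (-ω₁)
  exact h.congr_deriv (by simp [Den'])

lemma hasDerivAt_Den' (hΩ : ω₁ ^ 2 < 4 * ω₀) (x : ℝ) :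
    HasDerivAt (Den' b ω₀ ω₁) ((4 * ω₀ - ω₁ ^ 2) * (Den b ω₀ ω₁ x + ω₁)) x := by
  have h := (((hasDerivAt_id x).const_mul (Real.sqrt (4 * ω₀ - ω₁ ^ 2))).sinh.mul_const
    (Real.sqrt (4 * ω₀ - ω₁ ^ 2))).const_mul
    (Real.sqrt (ω₁ ^ 2 + gam b * (4 * ω₀ - ω₁ ^ 2)))
  refine h.congr_deriv ?_
  have hs : Real.sqrt (4 * ω₀ - ω₁ ^ 2) ^ 2 = 4 * ω₀ - ω₁ ^ 2 := Real.sq_sqrt (by linarith)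
  simp only [Den, id]
  generalize Real.cosh (Real.sqrt (4 * ω₀ - ω₁ ^ 2) * x) = C
  linear_combination (√(ω₁ ^ 2 + gam b * (4 * ω₀ - ω₁ ^ 2)) * C) * hs

lemma Den'_sq (hb : 0 < b) (hΩ : ω₁ ^ 2 < 4 * ω₀) (x : ℝ) :
    Den' b ω₀ ω₁ x ^ 2 = (4 * ω₀ - ω₁ ^ 2) * (Den b ω₀ ω₁ x ^ 2 + 2 * ω₁ * Den b ω₀ ω₁ x -
      gam b * (4 * ω₀ - ω₁ ^ 2)) := by
  have hs : Real.sqrt (4 * ω₀ - ω₁ ^ 2) ^ 2 = 4 * ω₀ - ω₁ ^ 2 := Real.sq_sqrt (by linarith)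
  have hr : Real.sqrt (ω₁ ^ 2 + gam b * (4 * ω₀ - ω₁ ^ 2)) ^ 2 =
      ω₁ ^ 2 + gam b * (4 * ω₀ - ω₁ ^ 2) := by
    refine Real.sq_sqrt ?_
    have := gam_gt hb
    have : 0 < 4 * ω₀ - ω₁ ^ 2 := by linarith
    positivity
  have hc := Real.cosh_sq (Real.sqrt (4 * ω₀ - ω₁ ^ 2) * x)
  simp only [Den, Den']
  generalize Real.cosh (Real.sqrt (4 * ω₀ - ω₁ ^ 2) * x) = C at *
  generalize Real.sinh (Real.sqrt (4 * ω₀ - ω₁ ^ 2) * x) = S at *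
  generalize Real.sqrt (4 * ω₀ - ω₁ ^ 2) = m at *
  generalize Real.sqrt (ω₁ ^ 2 + gam b * (4 * ω₀ - ω₁ ^ 2)) = r at *
  have hS : S ^ 2 = C ^ 2 - 1 := by linarith
  calc (r * (S * m)) ^ 2 = r ^ 2 * S ^ 2 * m ^ 2 := by ring
    _ = _ := by rw [hS, hs]; linear_combination (-(4 * ω₀ - ω₁ ^ 2)) * hr

/-- First integral of the profile equation. -/
lemma q_sq (hb : 0 < b) (hΩ : ω₁ ^ 2 < 4 * ω₀) (x : ℝ) :
    qfun b ω₀ ω₁ x ^ 2 = (4 * ω₀ - ω₁ ^ 2) / 4 + ω₁ / 4 * phit b ω₀ ω₁ x ^ 2 -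
      gam b / 16 * (phit b ω₀ ω₁ x ^ 2) ^ 2 := by
  have h := (Den_pos hb hΩ x).ne'
  have hd : 4 * ω₀ - ω₁ ^ 2 ≠ 0 := by linarith
  rw [phit_sq hb hΩ, qfun, neg_sq, div_pow, Den'_sq hb hΩ]
  field_simp
  ring

/-- The profile equation `˜φ'' = V(˜φ²) ˜φ` in Riccati form. -/
lemma hasDerivAt_q (hb : 0 < b) (hΩ : ω₁ ^ 2 < 4 * ω₀) (x : ℝ) :
    HasDerivAt (qfun b ω₀ ω₁)
      (Vpot b ω₀ ω₁ (phit b ω₀ ω₁ x ^ 2) - qfun b ω₀ ω₁ x ^ 2) x := by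
  have h := (Den_pos hb hΩ x).ne'
  have hq := ((hasDerivAt_Den' (b := b) hΩ x).div ((hasDerivAt_Den x).const_mul 2)
    (mul_ne_zero two_ne_zero h)).neg
  refine hq.congr_deriv ?_
  rw [q_sq hb hΩ, phit_sq hb hΩ, Vpot]
  have e := Den'_sq hb hΩ x
  have e2 : (4 * ω₀ - ω₁ ^ 2) * (Den b ω₀ ω₁ x + ω₁) * (2 * Den b ω₀ ω₁ x) -
      Den' b ω₀ ω₁ x * (2 * Den' b ω₀ ω₁ x) =
      2 * (4 * ω₀ - ω₁ ^ 2) * (gam b * (4 * ω₀ - ω₁ ^ 2) - ω₁ * Den b ω₀ ω₁ x) := by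
    linear_combination (-2) * e
  rw [e2]
  field_simp
  ring

lemma hasDerivAt_phit (hb : 0 < b) (hΩ : ω₁ ^ 2 < 4 * ω₀) (x : ℝ) :
    HasDerivAt (phit b ω₀ ω₁) (qfun b ω₀ ω₁ x * phit b ω₀ ω₁ x) x := by
  have h := Den_pos hb hΩ x
  have hd : 0 < 4 * ω₀ - ω₁ ^ 2 := by linarith
  have h1 := ((hasDerivAt_const x (2 * (4 * ω₀ - ω₁ ^ 2))).div (hasDerivAt_Den (b := b) x) h.ne').sqrt
    (by simp only [Pi.div_apply]; positivity)
  refine h1.congr_deriv ?_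
  have e : √(2 * (4 * ω₀ - ω₁ ^ 2) / Den b ω₀ ω₁ x) = phit b ω₀ ω₁ x := rfl
  simp only [Pi.div_apply]
  rw [e]
  have hp := phit_pos hb hΩ x
  have hs := phit_sq hb hΩ x
  rw [div_eq_iff (by positivity)]
  calc _ = -(2 * (4 * ω₀ - ω₁ ^ 2) / Den b ω₀ ω₁ x) * (Den' b ω₀ ω₁ x / Den b ω₀ ω₁ x) := by
        field_simp; ring
    _ = _ := by rw [← hs, qfun]; field_simp

/-- The derivative of the profile vanishes only at the origin. -/
lemma q_ne_zero (hb : 0 < b) (hΩ : ω₁ ^ 2 < 4 * ω₀) {x : ℝ} (hx : x ≠ 0) :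
    qfun b ω₀ ω₁ x ≠ 0 := by
  have h := (Den_pos hb hΩ x).ne'
  have hd : 0 < Real.sqrt (4 * ω₀ - ω₁ ^ 2) := Real.sqrt_pos.2 (by linarith)
  have hr := (abs_nonneg ω₁).trans_lt (abs_lt_rad hb hΩ)
  refine neg_ne_zero.2 (div_ne_zero (mul_ne_zero hr.ne' (mul_ne_zero ?_ hd.ne')) (by positivity))
  rw [Ne, Real.sinh_eq_zero]
  positivity

lemma q_zero : qfun b ω₀ ω₁ 0 = 0 := by simp [Den', qfun]

/-- The zero of `˜φ'` at the origin is simple: `V(˜φ(0)²) = (˜φ' / ˜φ)'(0) ≠ 0`. -/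
lemma Vpot_zero_ne (hb : 0 < b) (hΩ : ω₁ ^ 2 < 4 * ω₀) :
    Vpot b ω₀ ω₁ (phit b ω₀ ω₁ 0 ^ 2) ≠ 0 := by
  have h := Den_pos hb hΩ 0
  have hd : 0 < 4 * ω₀ - ω₁ ^ 2 := by linarith
  have hr := (abs_nonneg ω₁).trans_lt (abs_lt_rad hb hΩ)
  have hq := ((hasDerivAt_Den' (b := b) hΩ 0).div ((hasDerivAt_Den 0).const_mul 2)
    (mul_ne_zero two_ne_zero h.ne')).neg
  have e := hq.unique (hasDerivAt_q hb hΩ 0)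
  rw [q_zero] at e
  have e0 : Den' b ω₀ ω₁ 0 = 0 := by simp [Den']
  have e1 : Den b ω₀ ω₁ 0 + ω₁ = √(ω₁ ^ 2 + gam b * (4 * ω₀ - ω₁ ^ 2)) := by simp [Den]
  rw [e0, e1] at e
  intro hV
  rw [hV] at e
  have : 0 < (4 * ω₀ - ω₁ ^ 2) * √(ω₁ ^ 2 + gam b * (4 * ω₀ - ω₁ ^ 2)) *
      (2 * Den b ω₀ ω₁ 0) / (2 * Den b ω₀ ω₁ 0) ^ 2 := by positivity
  rw [zero_mul, sub_zero] at e
  linarith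

lemma cosh_ge (y : ℝ) : 1 + y ^ 2 / 4 ≤ Real.cosh y := by
  have h1 : Real.cosh y = 2 * Real.sinh (y / 2) ^ 2 + 1 := by
    have := Real.cosh_two_mul (y / 2)
    rw [Real.cosh_sq] at this
    rw [show y = 2 * (y / 2) by ring, this]; ring_nf
  have h2 : (y / 2) ^ 2 ≤ Real.sinh (y / 2) ^ 2 := by
    rw [sq_le_sq]
    rcases le_total 0 (y / 2) with h | h
    · rw [abs_of_nonneg h, abs_of_nonneg (Real.sinh_nonneg_iff.2 h)]
      exact Real.self_le_sinh_iff.2 h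
    · rw [abs_of_nonpos h, abs_of_nonpos (Real.sinh_nonpos_iff.2 h)]
      linarith [Real.sinh_le_self_iff.2 h]
  rw [h1]; nlinarith

lemma phit_sq_le (hb : 0 < b) (hΩ : ω₁ ^ 2 < 4 * ω₀) :
    ∃ C, ∀ x, phit b ω₀ ω₁ x ^ 2 ≤ C * (1 + x ^ 2)⁻¹ := by
  have hd : 0 < 4 * ω₀ - ω₁ ^ 2 := by linarith
  have hr := sub_pos.2 (abs_lt_rad hb hΩ)
  set r := √(ω₁ ^ 2 + gam b * (4 * ω₀ - ω₁ ^ 2)) - |ω₁| with hrdef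
  set m := min 1 ((4 * ω₀ - ω₁ ^ 2) / 4) with hm
  have hm0 : 0 < m := lt_min one_pos (by positivity)
  refine ⟨2 * (4 * ω₀ - ω₁ ^ 2) / (r * m), fun x => ?_⟩
  have hge : r * m * (1 + x ^ 2) ≤ Den b ω₀ ω₁ x := by
    refine le_trans ?_ (Den_ge x)
    rw [mul_assoc]
    refine mul_le_mul_of_nonneg_left (le_trans ?_ (cosh_ge _)) hr.le
    rw [mul_pow, Real.sq_sqrt hd.le]
    have h1 : m ≤ 1 := min_le_left _ _
    have h2 : m ≤ (4 * ω₀ - ω₁ ^ 2) / 4 := min_le_right _ _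
    nlinarith [sq_nonneg x]
  rw [phit_sq hb hΩ, ← div_eq_mul_inv, div_div]
  exact div_le_div_of_nonneg_left (by positivity) (by positivity) hge

lemma continuous_phit (hb : 0 < b) (hΩ : ω₁ ^ 2 < 4 * ω₀) : Continuous (phit b ω₀ ω₁) :=
  continuous_iff_continuousAt.2 fun x => (hasDerivAt_phit hb hΩ x).continuousAt

lemma integrable_phit_sq (hb : 0 < b) (hΩ : ω₁ ^ 2 < 4 * ω₀) :
    Integrable (fun x => phit b ω₀ ω₁ x ^ 2) := by
  obtain ⟨C, hC⟩ := phit_sq_le hb hΩ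
  refine (integrable_inv_one_add_sq.const_mul C).mono'
    ((continuous_phit hb hΩ).pow 2).aestronglyMeasurable (ae_of_all _ fun x => ?_)
  rw [Real.norm_of_nonneg (by positivity)]
  exact hC x

/-- The phase of `φ_ω`. -/
def theta (b ω₀ ω₁ x : ℝ) : ℝ :=
  ω₁ / 2 * x - (1 / 4) * ∫ η in Set.Iic x, phit b ω₀ ω₁ η ^ 2

/-- The unimodular factor `exp (iθ)` of `φ_ω`. -/
def frame (b ω₀ ω₁ x : ℝ) : ℂ := Complex.exp (Complex.I * theta b ω₀ ω₁ x)

lemma phi_eq (x : ℝ) : phi b ω₀ ω₁ x = phit b ω₀ ω₁ x * frame b ω₀ ω₁ x := by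
  rw [phi, frame, theta]
  congr 2
  push_cast
  ring

lemma hasDerivAt_theta (hb : 0 < b) (hΩ : ω₁ ^ 2 < 4 * ω₀) (x : ℝ) :
    HasDerivAt (theta b ω₀ ω₁) (ω₁ / 2 - phit b ω₀ ω₁ x ^ 2 / 4) x := by
  have hi := integrable_phit_sq hb hΩ
  have hc : Continuous (fun x => phit b ω₀ ω₁ x ^ 2) := (continuous_phit hb hΩ).pow 2
  have e : theta b ω₀ ω₁ = fun y => ω₁ / 2 * y - (1 / 4) *
      ((∫ η in Set.Iic (0 : ℝ), phit b ω₀ ω₁ η ^ 2) + ∫ η in (0 : ℝ)..y, phit b ω₀ ω₁ η ^ 2) := by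
    funext y
    rw [theta, ← intervalIntegral.integral_Iic_sub_Iic hi.integrableOn hi.integrableOn]
    ring
  rw [e]
  have h1 := intervalIntegral.integral_hasDerivAt_right (hc.intervalIntegrable 0 x)
    (hc.stronglyMeasurableAtFilter _ _) hc.continuousAt
  refine (((hasDerivAt_id x).const_mul (ω₁ / 2)).sub
    ((h1.const_add _).const_mul (1 / 4))).congr_deriv ?_
  ring

lemma frame_unit (x : ℝ) : (frame b ω₀ ω₁ x).re ^ 2 + (frame b ω₀ ω₁ x).im ^ 2 = 1 := by
  have : ‖frame b ω₀ ω₁ x‖ = 1 := by rw [frame, mul_comm]; exact Complex.norm_exp_ofReal_mul_I _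
  have h := R_self (frame b ω₀ ω₁ x)
  rw [this, R] at h
  linarith

lemma frame_ne (x : ℝ) : frame b ω₀ ω₁ x ≠ 0 := Complex.exp_ne_zero _

lemma hasDerivAt_frame (hb : 0 < b) (hΩ : ω₁ ^ 2 < 4 * ω₀) (x : ℝ) :
    HasDerivAt (frame b ω₀ ω₁)
      (Complex.I * (ω₁ / 2 - phit b ω₀ ω₁ x ^ 2 / 4 : ℝ) * frame b ω₀ ω₁ x) x := by
  have h := ((hasDerivAt_theta hb hΩ x).ofReal_comp.const_mul Complex.I).cexp
  exact h.congr_deriv (by rw [frame]; ring)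

lemma hasDerivAt_phi (hb : 0 < b) (hΩ : ω₁ ^ 2 < 4 * ω₀) (x : ℝ) :
    HasDerivAt (phi b ω₀ ω₁)
      ((qfun b ω₀ ω₁ x * phit b ω₀ ω₁ x +
        Complex.I * (ω₁ / 2 - phit b ω₀ ω₁ x ^ 2 / 4 : ℝ) * phit b ω₀ ω₁ x) *
        frame b ω₀ ω₁ x) x := by
  have h := (hasDerivAt_phit hb hΩ x).ofReal_comp.mul (hasDerivAt_frame hb hΩ x)
  have e : phi b ω₀ ω₁ = fun y => (phit b ω₀ ω₁ y : ℂ) * frame b ω₀ ω₁ y := funext phi_eq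
  rw [e]
  exact h.congr_deriv (by push_cast; ring)

lemma q_bdd (hb : 0 < b) (hΩ : ω₁ ^ 2 < 4 * ω₀) : ∃ C, ∀ x, qfun b ω₀ ω₁ x ^ 2 ≤ C := by
  refine ⟨(4 * ω₀ - ω₁ ^ 2) / 4 + ω₁ ^ 2, fun x => ?_⟩
  rw [q_sq hb hΩ]
  nlinarith [sq_nonneg (ω₁ - phit b ω₀ ω₁ x ^ 2 / 8), gam_gt hb, sq_nonneg (phit b ω₀ ω₁ x ^ 2), sq_nonneg ω₁]

lemma H1_phi (hb : 0 < b) (hΩ : ω₁ ^ 2 < 4 * ω₀) : H1 (phi b ω₀ ω₁) := by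
  obtain ⟨C, hC⟩ := phit_sq_le hb hΩ
  obtain ⟨Q, hQ⟩ := q_bdd hb hΩ
  have hi := integrable_phit_sq hb hΩ
  have hne : ∀ (z : ℂ) x, ‖z * frame b ω₀ ω₁ x‖ ^ 2 = R z z := by
    intro z x; rw [← R_self, R_mul_unit (frame_unit x)]
  refine ⟨fun x => (hasDerivAt_phi hb hΩ x).differentiableAt, ?_, ?_⟩
  · refine hi.congr (ae_of_all _ fun x => ?_)
    simp only [phi_eq, hne]
    simp [R]; ring
  · refine (hi.const_mul (Q + (|ω₁| / 2 + C / 4) ^ 2)).mono'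
      ((measurable_deriv _).norm.pow_const 2).aestronglyMeasurable (ae_of_all _ fun x => ?_)
    rw [Real.norm_of_nonneg (by positivity), (hasDerivAt_phi hb hΩ x).deriv, hne]
    have e : R (qfun b ω₀ ω₁ x * phit b ω₀ ω₁ x +
        Complex.I * (ω₁ / 2 - phit b ω₀ ω₁ x ^ 2 / 4 : ℝ) * phit b ω₀ ω₁ x)
        (qfun b ω₀ ω₁ x * phit b ω₀ ω₁ x +
        Complex.I * (ω₁ / 2 - phit b ω₀ ω₁ x ^ 2 / 4 : ℝ) * phit b ω₀ ω₁ x) =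
        (qfun b ω₀ ω₁ x ^ 2 + (ω₁ / 2 - phit b ω₀ ω₁ x ^ 2 / 4) ^ 2) * phit b ω₀ ω₁ x ^ 2 := by
      simp [R, -Complex.ofReal_sub]; ring
    rw [e]
    refine mul_le_mul_of_nonneg_right (add_le_add (hQ x) ?_) (by positivity)
    have hC0 : 0 ≤ C := by have := hC 0; simp at this; exact (sq_nonneg _).trans this
    have h1 : phit b ω₀ ω₁ x ^ 2 ≤ C := by
      refine (hC x).trans (mul_le_of_le_one_right hC0 (inv_le_one_of_one_le₀ ?_))
      nlinarith [sq_nonneg x]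
    have h2 := sq_nonneg (phit b ω₀ ω₁ x)
    rw [sq_le_sq, abs_of_nonneg (a := |ω₁| / 2 + C / 4) (by positivity), abs_le]
    constructor <;> linarith [neg_abs_le ω₁, le_abs_self ω₁]

end profile

/-! ### Sign of the second variation -/

/-- `∫ F ≥ 0` as soon as `F ≥ G'` off the origin for a continuous `G` that vanishes at `±∞`. -/
lemma integral_nonneg_of_primitive {F G g' : ℝ → ℝ} (hF : Integrable F) (hG : Continuous G)
    (hder : ∀ x ≠ 0, HasDerivAt G (g' x) x) (hle : ∀ x ≠ 0, g' x ≤ F x)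
    (hT : Tendsto G atTop (𝓝 0)) (hB : Tendsto G atBot (𝓝 0)) : 0 ≤ ∫ x, F x := by
  have h1 : ∀ r : ℝ, 0 ≤ r → G r - G (-r) ≤ ∫ x in (-r)..r, F x := by
    intro r hr
    have a1 : G r - G 0 ≤ ∫ x in (0 : ℝ)..r, F x :=
      intervalIntegral.sub_le_integral_of_hasDeriv_right_of_le hr hG.continuousOn
        (fun x hx => (hder x hx.1.ne').hasDerivWithinAt) hF.integrableOn
        (fun x hx => hle x hx.1.ne')
    have a2 : G 0 - G (-r) ≤ ∫ x in (-r)..0, F x :=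
      intervalIntegral.sub_le_integral_of_hasDeriv_right_of_le (by linarith) hG.continuousOn
        (fun x hx => (hder x hx.2.ne).hasDerivWithinAt) hF.integrableOn
        (fun x hx => hle x hx.2.ne)
    rw [← intervalIntegral.integral_add_adjacent_intervals (b := 0)
      hF.intervalIntegrable hF.intervalIntegrable]
    linarith
  have t1 : Tendsto (fun r : ℝ => G r - G (-r)) atTop (𝓝 0) := by
    simpa using hT.sub (hB.comp tendsto_neg_atTop_atBot)
  have t2 := intervalIntegral_tendsto_integral hF tendsto_neg_atTop_atBot tendsto_id
  exact le_of_tendsto_of_tendsto t1 t2 ((eventually_ge_atTop 0).mono h1)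

section core

variable {b ω₀ ω₁ : ℝ}

lemma tendsto_sqs {l : Filter ℝ} {w : ℝ → ℂ} (hw : Tendsto (fun x => ‖w x‖ ^ 2) l (𝓝 0)) :
    Tendsto (fun x => (w x).re ^ 2) l (𝓝 0) ∧ Tendsto (fun x => (w x).im ^ 2) l (𝓝 0) := by
  constructor <;>
  · refine squeeze_zero (fun x => sq_nonneg _) (fun x => ?_) hw
    rw [← R_self, R]
    nlinarith [sq_nonneg (w x).re, sq_nonneg (w x).im]

/-- The function `w` with `v = w exp (iθ)`; its real part is the component of `v` along `φ_ω`. -/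
def toFrame (b ω₀ ω₁ : ℝ) (v : ℝ → ℂ) (x : ℝ) : ℂ := v x * (frame b ω₀ ω₁ x)⁻¹

lemma toFrame_mul (v : ℝ → ℂ) (x : ℝ) : toFrame b ω₀ ω₁ v x * frame b ω₀ ω₁ x = v x := by
  rw [toFrame, inv_mul_cancel_right₀ (frame_ne x)]

lemma norm_toFrame (v : ℝ → ℂ) (x : ℝ) : ‖toFrame b ω₀ ω₁ v x‖ ^ 2 = ‖v x‖ ^ 2 := by
  rw [← toFrame_mul (b := b) (ω₀ := ω₀) (ω₁ := ω₁) v x, ← R_self (_ * _),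
    R_mul_unit (frame_unit x), R_self]

lemma differentiable_toFrame (hb : 0 < b) (hΩ : ω₁ ^ 2 < 4 * ω₀) {v : ℝ → ℂ}
    (hv : Differentiable ℝ v) : Differentiable ℝ (toFrame b ω₀ ω₁ v) := fun x =>
  (hv x).mul ((hasDerivAt_frame hb hΩ x).differentiableAt.inv (frame_ne x))

lemma deriv_eq_frame (hb : 0 < b) (hΩ : ω₁ ^ 2 < 4 * ω₀) {v : ℝ → ℂ}
    (hv : Differentiable ℝ v) (x : ℝ) :
    deriv v x = (deriv (toFrame b ω₀ ω₁ v) x +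
      Complex.I * (ω₁ / 2 - phit b ω₀ ω₁ x ^ 2 / 4 : ℝ) * toFrame b ω₀ ω₁ v x) *
        frame b ω₀ ω₁ x := by
  have e : v = fun y => toFrame b ω₀ ω₁ v y * frame b ω₀ ω₁ y :=
    funext fun y => (toFrame_mul v y).symm
  have h := ((differentiable_toFrame hb hΩ hv x).hasDerivAt.mul (hasDerivAt_frame hb hΩ x)).deriv
  conv_lhs => rw [e]
  refine h.trans ?_
  ring

lemma tendsto_profile {l : Filter ℝ}
    (hφ : Tendsto (fun x => ‖phi b ω₀ ω₁ x‖ ^ 2) l (𝓝 0)) :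
    Tendsto (fun x => phit b ω₀ ω₁ x ^ 2) l (𝓝 0) := by
  refine hφ.congr fun x => ?_
  rw [phi_eq, ← R_self, R_mul_unit (frame_unit x)]
  simp [R]; ring

/-- The Euler–Lagrange equation `S_ω'(φ_ω) = 0`: the density of the first variation in direction
`v = w exp (iθ)` is the derivative of `˜φ' Re w`. -/
lemma integral_c1_eq_zero (hb : 0 < b) (hΩ : ω₁ ^ 2 < 4 * ω₀) {v : ℝ → ℂ} (hv : H1 v) :
    ∫ x, c1 ω₀ ω₁ (1 / 2) (1 / 4) (b / 6) (phi b ω₀ ω₁ x) (deriv (phi b ω₀ ω₁) x)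
      (v x) (deriv v x) = 0 := by
  have hφ := H1_phi hb hΩ
  have hint := (expansion hφ hv ω₀ ω₁ (1 / 2) (1 / 4) (b / 6)).1.1
  obtain ⟨Q, hQ⟩ := q_bdd hb hΩ
  set w := toFrame b ω₀ ω₁ v with hw
  have hder : ∀ x, HasDerivAt (fun x => phit b ω₀ ω₁ x * qfun b ω₀ ω₁ x * (w x).re)
      (c1 ω₀ ω₁ (1 / 2) (1 / 4) (b / 6) (phi b ω₀ ω₁ x) (deriv (phi b ω₀ ω₁) x)
      (v x) (deriv v x)) x := by
    intro x
    have h := ((hasDerivAt_phit hb hΩ x).mul (hasDerivAt_q hb hΩ x)).mul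
      (hasDerivAt_re (differentiable_toFrame hb hΩ hv.1 x).hasDerivAt)
    refine h.congr_deriv ?_
    rw [phi_eq, (hasDerivAt_phi hb hΩ x).deriv, deriv_eq_frame hb hΩ hv.1 x,
      ← toFrame_mul (b := b) (ω₀ := ω₀) (ω₁ := ω₁) v x, c1_frame _ _ _ _ _ (frame_unit x)]
    simp only [Pi.mul_apply]
    ring
  have hlim : ∀ l : Filter ℝ, Tendsto (fun x => ‖phi b ω₀ ω₁ x‖ ^ 2) l (𝓝 0) →
      Tendsto (fun x => ‖v x‖ ^ 2) l (𝓝 0) →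
      Tendsto (fun x => phit b ω₀ ω₁ x * qfun b ω₀ ω₁ x * (w x).re) l (𝓝 0) := by
    intro l h1 h2
    have h3 := tendsto_profile h1
    have h4 : Tendsto (fun x => (w x).re ^ 2) l (𝓝 0) :=
      (tendsto_sqs (h2.congr fun x => (norm_toFrame v x).symm)).1
    refine squeeze_zero_norm (a := fun x => Q * phit b ω₀ ω₁ x ^ 2 + (w x).re ^ 2) (fun x => ?_)
      (by simpa using (h3.const_mul Q).add h4)
    rw [Real.norm_eq_abs, abs_le]
    have := mul_le_mul_of_nonneg_right (hQ x) (sq_nonneg (phit b ω₀ ω₁ x))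
    constructor <;>
      nlinarith [sq_nonneg (qfun b ω₀ ω₁ x * phit b ω₀ ω₁ x + (w x).re),
        sq_nonneg (qfun b ω₀ ω₁ x * phit b ω₀ ω₁ x - (w x).re),
        sq_nonneg (qfun b ω₀ ω₁ x * phit b ω₀ ω₁ x), sq_nonneg (w x).re]
  have := integral_of_hasDerivAt_of_tendsto hder hint
    (hlim _ (H1.tendsto hφ).2 (H1.tendsto hv).2) (hlim _ (H1.tendsto hφ).1 (H1.tendsto hv).1)
  simpa using this

/-- The second variation of `S_ω` is nonnegative on directions `v = (h + ik) exp (iθ)` with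
`h 0 = 0`. With `ψ = ˜φ`, `q = ψ' / ψ` and `p = ψ'' / ψ' = V / q`, its density equals
`(h' - p h)² + (k' - q k + ψ² h / 2)² + (p h² + q k²)'` off the origin. The pole of `p` at the origin
is simple, so `p h² + q k²` is continuous there because `h` vanishes. -/
lemma integral_c2_nonneg (hb : 0 < b) (hΩ : ω₁ ^ 2 < 4 * ω₀) {v : ℝ → ℂ} (hv : H1 v)
    (h0 : (toFrame b ω₀ ω₁ v 0).re = 0) :
    0 ≤ ∫ x, c2 ω₀ ω₁ (1 / 2) (1 / 4) (b / 6) (phi b ω₀ ω₁ x) (deriv (phi b ω₀ ω₁) x)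
      (v x) (deriv v x) := by
  have hφ := H1_phi hb hΩ
  have hint := (expansion hφ hv ω₀ ω₁ (1 / 2) (1 / 4) (b / 6)).1.2.const_mul 2
  obtain ⟨Q, hQ⟩ := q_bdd hb hΩ
  set w := toFrame b ω₀ ω₁ v with hw
  have hwd := differentiable_toFrame hb hΩ hv.1
  set ψ := phit b ω₀ ω₁ with hψ
  set q := qfun b ω₀ ω₁ with hq
  set V : ℝ → ℝ := fun x => Vpot b ω₀ ω₁ (ψ x ^ 2) with hV
  have hre : ∀ x, HasDerivAt (fun y => (w y).re) (deriv w x).re x := fun x =>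
    hasDerivAt_re (hwd x).hasDerivAt
  have him : ∀ x, HasDerivAt (fun y => (w y).im) (deriv w x).im x := fun x =>
    hasDerivAt_im (hwd x).hasDerivAt
  have hqd : ∀ x, HasDerivAt q (V x - q x ^ 2) x := hasDerivAt_q hb hΩ
  have hψd : ∀ x, HasDerivAt ψ (q x * ψ x) x := hasDerivAt_phit hb hΩ
  have hψ2 : ∀ x, HasDerivAt (fun y => ψ y ^ 2) (2 * q x * ψ x ^ 2) x := fun x =>
    ((hψd x).pow 2).congr_deriv (by push_cast; ring)
  have hVd : ∀ x, HasDerivAt V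
      (q x * (ω₁ * ψ x ^ 2 - 3 * gam b / 4 * (ψ x ^ 2) ^ 2)) x := by
    intro x
    have h := (((hψ2 x).const_mul (ω₁ / 2)).const_add ((4 * ω₀ - ω₁ ^ 2) / 4)).sub
      (((hψ2 x).pow 2).const_mul (3 * gam b / 16))
    exact h.congr_deriv (by push_cast; ring)
  set p : ℝ → ℝ := fun x => V x / q x with hp
  set G : ℝ → ℝ := fun x => p x * (w x).re ^ 2 + q x * (w x).im ^ 2 with hG
  have hGd : ∀ x ≠ 0, HasDerivAt G
      ((Wpot b ω₀ ω₁ (ψ x ^ 2) - p x ^ 2) * (w x).re ^ 2 + p x * (2 * (w x).re * (deriv w x).re) +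
        ((V x - q x ^ 2) * (w x).im ^ 2 + q x * (2 * (w x).im * (deriv w x).im))) x := by
    intro x hx
    have hne : q x ≠ 0 := q_ne_zero hb hΩ hx
    have hpd : HasDerivAt p (Wpot b ω₀ ω₁ (ψ x ^ 2) - p x ^ 2) x := by
      refine ((hVd x).div (hqd x) hne).congr_deriv ?_
      have eW : Wpot b ω₀ ω₁ (ψ x ^ 2) =
          V x + (ω₁ * ψ x ^ 2 - 3 * gam b / 4 * (ψ x ^ 2) ^ 2) := by
        simp only [hV, Wpot, Vpot]; ring
      rw [eW, hp]
      field_simp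
      ring
    refine ((hpd.mul ((hre x).pow 2)).add ((hqd x).mul ((him x).pow 2))).congr_deriv ?_
    simp only [Pi.pow_apply]
    push_cast
    ring
  have hGle : ∀ x ≠ 0,
      ((Wpot b ω₀ ω₁ (ψ x ^ 2) - p x ^ 2) * (w x).re ^ 2 + p x * (2 * (w x).re * (deriv w x).re) +
        ((V x - q x ^ 2) * (w x).im ^ 2 + q x * (2 * (w x).im * (deriv w x).im))) ≤
      2 * c2 ω₀ ω₁ (1 / 2) (1 / 4) (b / 6) (phi b ω₀ ω₁ x) (deriv (phi b ω₀ ω₁) x)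
        (v x) (deriv v x) := by
    intro x _
    rw [phi_eq, (hasDerivAt_phi hb hΩ x).deriv, deriv_eq_frame hb hΩ hv.1 x,
      ← toFrame_mul (b := b) (ω₀ := ω₀) (ω₁ := ω₁) v x, c2_frame _ _ _ _ _ (frame_unit x)]
    rw [← hw, ← hψ, ← hq, show Vpot b ω₀ ω₁ (ψ x ^ 2) = V x from rfl]
    nlinarith [sq_nonneg ((deriv w x).re - p x * (w x).re),
      sq_nonneg ((deriv w x).im - q x * (w x).im + ψ x ^ 2 * (w x).re / 2)]
  have hq0 : q 0 = 0 := q_zero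
  -- `p h² = V h (h / q)`, where `h / q` is a quotient of slopes and `q' 0 = V 0 ≠ 0`
  have hG0 : ContinuousAt G 0 := by
    have hV0 : V 0 ≠ 0 := Vpot_zero_ne hb hΩ
    have s1 := hasDerivAt_iff_tendsto_slope.1 (hre 0)
    have s2 := hasDerivAt_iff_tendsto_slope.1 (hqd 0)
    rw [hq0] at s2
    have hw0 : Tendsto (fun x => (w x).re) (𝓝[≠] 0) (𝓝 0) := by
      have := (hre 0).continuousAt.tendsto
      rw [h0] at this
      exact this.mono_left nhdsWithin_le_nhds
    have hVc := (hVd 0).continuousAt.tendsto.mono_left (nhdsWithin_le_nhds (s := {0}ᶜ))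
    have t := (hVc.mul hw0).mul (s1.div s2 (by simpa using hV0))
    have t' : ContinuousAt (fun x => p x * (w x).re ^ 2) 0 := by
      rw [continuousAt_iff_punctured_nhds]
      simp only [h0, mul_zero, zero_mul, ne_eq, OfNat.ofNat_ne_zero, not_false_eq_true,
        zero_pow] at t ⊢
      refine t.congr' ?_
      filter_upwards [self_mem_nhdsWithin] with x hx
      have hx' : x ≠ 0 := hx
      have hne : q x ≠ 0 := q_ne_zero hb hΩ hx'
      simp only [slope_def_field, h0, hq0, sub_zero, hp, Pi.div_apply]
      field_simp
    exact t'.add ((hqd 0).continuousAt.mul ((him 0).continuousAt.pow 2))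
  have hGc : Continuous G := continuous_iff_continuousAt.2 fun x => by
    by_cases hx : x = 0
    · rw [hx]; exact hG0
    · exact (hGd x hx).continuousAt
  have hlim : ∀ l : Filter ℝ, Tendsto (fun x => ‖phi b ω₀ ω₁ x‖ ^ 2) l (𝓝 0) →
      Tendsto (fun x => ‖v x‖ ^ 2) l (𝓝 0) → Tendsto G l (𝓝 0) := by
    intro l h1 h2
    have h3 : Tendsto (fun x => ψ x ^ 2) l (𝓝 0) := tendsto_profile h1
    obtain ⟨h4, h5⟩ := tendsto_sqs (h2.congr fun x => (norm_toFrame v x).symm)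
    have hVl : Tendsto V l (𝓝 ((4 * ω₀ - ω₁ ^ 2) / 4)) := by
      have := ((h3.const_mul (ω₁ / 2)).const_add ((4 * ω₀ - ω₁ ^ 2) / 4)).sub
        ((h3.pow 2).const_mul (3 * gam b / 16))
      simp only [hV, Vpot]
      simpa using this
    have hql : Tendsto (fun x => q x ^ 2) l (𝓝 ((4 * ω₀ - ω₁ ^ 2) / 4)) := by
      have := ((h3.const_mul (ω₁ / 4)).const_add ((4 * ω₀ - ω₁ ^ 2) / 4)).sub
        ((h3.pow 2).const_mul (gam b / 16))
      have e : ∀ x, q x ^ 2 = _ := q_sq hb hΩ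
      simp only [e]
      simpa using this
    have hpl : Tendsto (fun x => p x ^ 2) l
        (𝓝 (((4 * ω₀ - ω₁ ^ 2) / 4) ^ 2 / ((4 * ω₀ - ω₁ ^ 2) / 4))) := by
      refine ((hVl.pow 2).div hql (by linarith)).congr fun x => ?_
      exact (div_pow _ _ _).symm
    have hb2 : Tendsto (fun x => (1 + p x ^ 2) * (w x).re ^ 2 + (1 + q x ^ 2) * (w x).im ^ 2) l
        (𝓝 0) := by
      have := ((hpl.const_add 1).mul h4).add ((hql.const_add 1).mul h5)
      simpa using this
    refine squeeze_zero_norm (fun x => ?_) hb2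
    have e1 : |p x| ≤ 1 + p x ^ 2 := by
      rw [abs_le]; constructor <;> nlinarith [sq_nonneg (p x + 1), sq_nonneg (p x - 1)]
    have e2 : |q x| ≤ 1 + q x ^ 2 := by
      rw [abs_le]; constructor <;> nlinarith [sq_nonneg (q x + 1), sq_nonneg (q x - 1)]
    calc ‖G x‖ ≤ |p x * (w x).re ^ 2| + |q x * (w x).im ^ 2| := abs_add_le _ _
      _ = |p x| * (w x).re ^ 2 + |q x| * (w x).im ^ 2 := by
        rw [abs_mul, abs_mul, abs_of_nonneg (sq_nonneg (w x).re),
          abs_of_nonneg (sq_nonneg (w x).im)]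
      _ ≤ _ := by gcongr
  have := integral_nonneg_of_primitive hint hGc hGd hGle
    (hlim _ (H1.tendsto hφ).1 (H1.tendsto hv).1) (hlim _ (H1.tendsto hφ).2 (H1.tendsto hv).2)
  rw [integral_const_mul] at this
  linarith

lemma integral_c2_self_nonpos (hb : 0 < b) (hΩ : ω₁ ^ 2 < 4 * ω₀) :
    ∫ x, c2 ω₀ ω₁ (1 / 2) (1 / 4) (b / 6) (phi b ω₀ ω₁ x) (deriv (phi b ω₀ ω₁) x)
      (phi b ω₀ ω₁ x) (deriv (phi b ω₀ ω₁) x) ≤ 0 := by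
  have hφ := H1_phi hb hΩ
  obtain ⟨i1, i2⟩ := (expansion hφ hφ ω₀ ω₁ (1 / 2) (1 / 4) (b / 6)).1
  have hle := integral_mono (i2.const_mul 2) (i1.const_mul 3) (fun x => by
    simp only [c2_self]
    have h1 := Ldens_nonneg hΩ (phi b ω₀ ω₁ x) (deriv (phi b ω₀ ω₁) x)
    have h2 : 0 ≤ b * R (phi b ω₀ ω₁ x) (phi b ω₀ ω₁ x) ^ 3 := by rw [R_self]; positivity
    linarith)
  rw [integral_const_mul, integral_const_mul, integral_c1_eq_zero hb hΩ hφ] at hle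
  linarith

end core

end Stmt16

open Stmt16 in
theorem stmt16 (b : ℝ) (hb : 0 < b) (ω₀ ω₁ : ℝ) (hΩ : ω₁ ^ 2 < 4 * ω₀)
    (v : ℝ → ℂ) (hv : H1 v)
    (hK : deriv (fun t : ℝ => Kfun b ω₀ ω₁ (fun x => phi b ω₀ ω₁ x + (t : ℂ) * v x)) 0 = 0) :
    0 ≤ iteratedDeriv 2
        (fun t : ℝ => Sfun b ω₀ ω₁ (fun x => phi b ω₀ ω₁ x + (t : ℂ) * v x)) 0 := by
  have hφ := H1_phi hb hΩ
  obtain ⟨⟨iK, -⟩, eK⟩ := expansion hφ hv ω₀ ω₁ 1 1 b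
  obtain ⟨⟨i1, i2⟩, eS⟩ := expansion hφ hv ω₀ ω₁ (1 / 2) (1 / 4) (b / 6)
  rw [(eK _ fun t => by simp only [Kfun, one_mul]).1] at hK
  rw [(eS _ fun t => by simp only [Sfun]).2]
  -- `v - s φ` then has no component along `φ` at the origin
  set s : ℝ := (toFrame b ω₀ ω₁ v 0).re / phit b ω₀ ω₁ 0 with hs
  have hn := H1.add_mul hv hφ (-s)
  have hn0 : (toFrame b ω₀ ω₁ (fun x => v x + ((-s : ℝ) : ℂ) * phi b ω₀ ω₁ x) 0).re = 0 := by
    have e : toFrame b ω₀ ω₁ (fun x => v x + ((-s : ℝ) : ℂ) * phi b ω₀ ω₁ x) 0 =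
        toFrame b ω₀ ω₁ v 0 + ((-s * phit b ω₀ ω₁ 0 : ℝ) : ℂ) := by
      have := frame_ne (b := b) (ω₀ := ω₀) (ω₁ := ω₁) 0
      simp only [toFrame, phi_eq]
      push_cast
      field_simp
    have := (phit_pos hb hΩ 0).ne'
    rw [e, Complex.add_re, Complex.ofReal_re, hs]
    field_simp
    ring
  have hpos := integral_c2_nonneg hb hΩ hn hn0
  have iN := (expansion hφ hn ω₀ ω₁ (1 / 2) (1 / 4) (b / 6)).1.2
  have iφ := (expansion hφ hφ ω₀ ω₁ (1 / 2) (1 / 4) (b / 6)).1.2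
  simp only [deriv_add_mul hv.1 hφ.1] at hpos iN
  have hneg := integral_c2_self_nonpos hb hΩ
  have hEL := integral_c1_eq_zero hb hΩ hv
  have key : ∫ x, c2 ω₀ ω₁ (1 / 2) (1 / 4) (b / 6) (phi b ω₀ ω₁ x) (deriv (phi b ω₀ ω₁) x)
      (v x) (deriv v x) = _ :=
    (integral_congr_ae (ae_of_all _ fun x => c2_polar b ω₀ ω₁ s (phi b ω₀ ω₁ x)
      (deriv (phi b ω₀ ω₁) x) (v x) (deriv v x))).trans
    ((integral_add (iN.sub (iφ.const_mul (s ^ 2))) ((iK.sub i1).const_mul s)).trans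
      (congrArg₂ (· + ·) (integral_sub iN (iφ.const_mul (s ^ 2))) (integral_const_mul s _)))
  have key2 := integral_sub iK i1
  simp only [Pi.sub_apply] at key
  rw [key, integral_const_mul, key2, hK, hEL]
  nlinarith [mul_nonneg (sq_nonneg s) (neg_nonneg.2 hneg)]

end
end

section
/- Let b ≥ 0, γ = 1 + 16b/3, and let ω = (ω₀, ω₁) ∈ Ω. Then the second derivative at λ = 1 of the function λ ↦ S_ω(λ·φ_ω) = (λ²/2)·L_ω(φ_ω) − (λ⁴/4)·P(φ_ω) − (λ⁶·b/6)·∫_ℝ |φ_ω|⁶ dx is strictly negative; equivalently, L_ω(φ_ω) − 3·P(φ_ω) − 5b·∫_ℝ |φ_ω|⁶ dx < 0. -/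
/-!
Write `f = ˜φ²`, `c = 4ω₀ - ω₁²`, and `Mₙ = ∫ fⁿ`. The explicit formula gives
`f'² = c f² + ω₁ f³ - (γ/4) f⁴` and `f'' = c f + (3/2) ω₁ f² - (γ/2) f³`
(`isProfile_cosh`). Since `f'` is integrable, integrating the second identity yields
`γ M₃ = 2c M₁ + 3ω₁ M₂` (`IsProfile.moments`).

The phase of `φ` has derivative `ω₁/2 - f/4`, so `L`, `P` and `∫ |φ|⁶` are linear combinations of
`M₁, M₂, M₃`; with the moment relation,
`L - 3P - 5b ∫ |φ|⁶ = ω₁ M₂ - ((3γ - 1)/4) M₃` (`second_variation_eq`).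
This is negative (`IsProfile.neg`): obviously so if `ω₁ ≤ 0`, while for `ω₁ > 0`,
`(3γ - 1) M₃ ≥ 2γ M₃ = 4c M₁ + 6ω₁ M₂ > 4ω₁ M₂`, because `γ ≥ 1`.

Finally `S(λφ)` is a polynomial in `λ` by homogeneity (`Sfun_smul`), whose second derivative at `1`
is the quantity above.
-/

open MeasureTheory

noncomputable section

/-- The facts about the squared profile `f = ˜φ²` (with derivative `f'`) that the argument uses.
Here `c = 4ω₀ - ω₁²`; `first` is the first integral of the second-order equation `deriv2`. -/
structure IsProfile (c w γ : ℝ) (f f' : ℝ → ℝ) : Prop where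
  pos : ∀ x, 0 < f x
  deriv1 : ∀ x, HasDerivAt f (f' x) x
  deriv2 : ∀ x, HasDerivAt f' (c * f x + 3 / 2 * w * f x ^ 2 - γ / 2 * f x ^ 3) x
  first : ∀ x, f' x ^ 2 = c * f x ^ 2 + w * f x ^ 3 - γ / 4 * f x ^ 4
  bdd : ∃ K, ∀ x, f x ≤ K
  int : Integrable f

/-! ### The explicit profile -/

lemma one_add_sq_le_cosh (y : ℝ) : (1 + y ^ 2) / 4 ≤ Real.cosh y := by
  have h := Real.quadratic_le_exp_of_nonneg (abs_nonneg y)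
  rw [← Real.cosh_abs, Real.cosh_eq]
  have := Real.exp_pos (-|y|)
  have := abs_nonneg y
  rw [sq_abs] at h
  linarith

lemma isProfile_cosh (c w γ : ℝ) (hc : 0 < c) (hγ : 1 ≤ γ) :
    ∃ f', IsProfile c w γ (fun x => 2 * c /
      (-w + √(w ^ 2 + γ * c) * Real.cosh (√c * x))) f' := by
  set s := √(w ^ 2 + γ * c) with hs
  set k := √c with hk
  have hk0 : 0 < k := Real.sqrt_pos.2 hc
  have hk2 : k ^ 2 = c := Real.sq_sqrt hc.le
  have hs2 : s ^ 2 = w ^ 2 + γ * c := Real.sq_sqrt (by positivity)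
  have hsw : |w| < s := by
    rw [hs]
    apply Real.lt_sqrt_of_sq_lt
    rw [sq_abs]
    have : 0 < γ * c := by positivity
    linarith
  have hs0 : 0 < s := (abs_nonneg w).trans_lt hsw
  -- The denominator is bounded below by a positive multiple of `cosh`.
  have hD : ∀ x, (s - |w|) * Real.cosh (k * x) ≤ -w + s * Real.cosh (k * x) := by
    intro x
    have h1 := Real.one_le_cosh (k * x)
    nlinarith [le_abs_self w, abs_nonneg w]
  have hsw' : 0 < s - |w| := sub_pos.2 hsw
  have hDpos : ∀ x, 0 < -w + s * Real.cosh (k * x) := fun x =>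
    (mul_pos hsw' (Real.cosh_pos _)).trans_le (hD x)
  have hcosh : ∀ x, HasDerivAt (fun x => Real.cosh (k * x)) (k * Real.sinh (k * x)) x := by
    intro x
    have h := ((hasDerivAt_id x).const_mul k).cosh
    refine h.congr_deriv ?_
    rw [id]; ring
  have hsinh : ∀ x, HasDerivAt (fun x => Real.sinh (k * x)) (k * Real.cosh (k * x)) x := by
    intro x
    have h := ((hasDerivAt_id x).const_mul k).sinh
    refine h.congr_deriv ?_
    rw [id]; ring
  have hDd : ∀ x, HasDerivAt (fun x => -w + s * Real.cosh (k * x))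
      (s * (k * Real.sinh (k * x))) x := fun x => ((hcosh x).const_mul s).const_add (-w)
  have h1 : ∀ x, HasDerivAt (fun x => 2 * c / (-w + s * Real.cosh (k * x)))
      (-(2 * c * (s * (k * Real.sinh (k * x)))) / (-w + s * Real.cosh (k * x)) ^ 2) x := by
    intro x
    have h := (hasDerivAt_const x (2 * c)).div (hDd x) (hDpos x).ne'
    refine h.congr_deriv ?_
    simp
  have hle : ∀ x, 2 * c / (-w + s * Real.cosh (k * x)) ≤
      8 * c / (s - |w|) * (1 + (k * x) ^ 2)⁻¹ := by
    intro x
    have h2 : (s - |w|) * ((1 + (k * x) ^ 2) / 4) ≤ -w + s * Real.cosh (k * x) :=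
      (mul_le_mul_of_nonneg_left (one_add_sq_le_cosh _) hsw'.le).trans (hD x)
    calc _ ≤ 2 * c / ((s - |w|) * ((1 + (k * x) ^ 2) / 4)) := by gcongr
      _ = _ := by field_simp; ring
  refine ⟨fun x => -(2 * c * (s * (k * Real.sinh (k * x)))) /
    (-w + s * Real.cosh (k * x)) ^ 2, ?_, h1, ?_, ?_, ?_, ?_⟩
  · intro x
    have := hDpos x
    positivity
  · intro x
    have hne := (hDpos x).ne'
    have h := ((((hsinh x).const_mul k).const_mul s).const_mul (2 * c)).neg.div
      ((hDd x).pow 2) (pow_ne_zero 2 hne)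
    refine h.congr_deriv ?_
    have hsq := Real.cosh_sq (k * x)
    have hD2 : (s * (k * Real.sinh (k * x))) ^ 2 =
        c * (s ^ 2 * Real.cosh (k * x) ^ 2 - (w ^ 2 + γ * c)) := by
      rw [← hs2, ← hk2, hsq]; ring
    have hk2' : k * (k * Real.cosh (k * x)) = c * Real.cosh (k * x) := by
      rw [← mul_assoc, ← sq, hk2]
    simp only [Pi.neg_apply, Pi.pow_apply, Nat.cast_ofNat, Nat.add_one_sub_one, pow_one]
    rw [hk2']
    generalize hS : s * (k * Real.sinh (k * x)) = S at *
    set D := -w + s * Real.cosh (k * x) with hDdef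
    have hC : s * (c * Real.cosh (k * x)) = c * (D + w) := by rw [hDdef]; ring
    have hD2' : S ^ 2 = c * (D ^ 2 + 2 * w * D - γ * c) := by rw [hD2, hDdef]; ring
    rw [hC]
    clear_value D
    field_simp
    rw [hD2']
    ring
  · intro x
    have hne := (hDpos x).ne'
    have hsq := Real.cosh_sq (k * x)
    have hD2 : (s * (k * Real.sinh (k * x))) ^ 2 =
        c * (s ^ 2 * Real.cosh (k * x) ^ 2 - (w ^ 2 + γ * c)) := by
      rw [← hs2, ← hk2, hsq]; ring
    generalize hS : s * (k * Real.sinh (k * x)) = S at *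
    set D := -w + s * Real.cosh (k * x) with hDdef
    have hD2' : S ^ 2 = c * (D ^ 2 + 2 * w * D - γ * c) := by rw [hD2, hDdef]; ring
    field_simp
    rw [hD2']
    ring
  · refine ⟨8 * c / (s - |w|), fun x => (hle x).trans ?_⟩
    apply mul_le_of_le_one_right (by positivity)
    apply inv_le_one_of_one_le₀
    nlinarith [sq_nonneg (k * x)]
  · refine ((integrable_inv_one_add_sq.comp_mul_left' hk0.ne').const_mul
      (8 * c / (s - |w|))).mono' ?_ (Filter.Eventually.of_forall fun x => ?_)
    · exact (continuous_iff_continuousAt.2 fun x => (h1 x).continuousAt).aestronglyMeasurable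
    · rw [Real.norm_of_nonneg (by have := hDpos x; positivity)]
      exact hle x

/-! ### Integrability and the sign of the reduced integral -/

namespace IsProfile

variable {c w γ : ℝ} {f f' : ℝ → ℝ}

lemma continuous (h : IsProfile c w γ f f') : Continuous f :=
  continuous_iff_continuousAt.2 fun x => (h.deriv1 x).continuousAt

lemma continuous' (h : IsProfile c w γ f f') : Continuous f' :=
  continuous_iff_continuousAt.2 fun x => (h.deriv2 x).continuousAt

lemma mul_int (h : IsProfile c w γ f f') {g : ℝ → ℝ} (hg : Integrable g) :
    Integrable fun x => f x * g x := by
  obtain ⟨K, hK⟩ := h.bdd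
  refine hg.bdd_mul (c := K) h.continuous.aestronglyMeasurable (Filter.Eventually.of_forall ?_)
  intro x
  rw [Real.norm_of_nonneg (h.pos x).le]
  exact hK x

lemma int2 (h : IsProfile c w γ f f') : Integrable fun x => f x ^ 2 := by
  simpa only [sq] using h.mul_int h.int

lemma int3 (h : IsProfile c w γ f f') : Integrable fun x => f x ^ 3 := by
  simpa only [pow_succ' _ 2] using h.mul_int h.int2

/-- The first integral gives `|f'| ≤ C f`. -/
lemma int' (h : IsProfile c w γ f f') (hc : 0 < c) (hγ : 1 ≤ γ) : Integrable f' := by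
  obtain ⟨K, hK⟩ := h.bdd
  refine (h.int.const_mul (√(c + |w| * K))).mono' h.continuous'.aestronglyMeasurable
    (Filter.Eventually.of_forall fun x => ?_)
  have hf := h.pos x
  have hK0 : 0 < K := hf.trans_le (hK x)
  rw [Real.norm_eq_abs]
  apply abs_le_of_sq_le_sq _ (by positivity)
  rw [h.first x, mul_pow, Real.sq_sqrt (by positivity)]
  have e1 : w * f x ≤ |w| * K :=
    mul_le_mul (le_abs_self w) (hK x) hf.le (abs_nonneg w)
  have e2 : w * f x ^ 3 ≤ |w| * K * f x ^ 2 := by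
    have := mul_le_mul_of_nonneg_right e1 (sq_nonneg (f x))
    linarith
  have : 0 ≤ γ / 4 * f x ^ 4 := by positivity
  linarith

/-- Integrating the second-order equation gives the relation between the moments. -/
lemma moments (h : IsProfile c w γ f f') (hc : 0 < c) (hγ : 1 ≤ γ) :
    c * (∫ x, f x) + 3 / 2 * w * (∫ x, f x ^ 2) - γ / 2 * (∫ x, f x ^ 3) = 0 := by
  have i1 := h.int.const_mul c
  have i2 := h.int2.const_mul (3 / 2 * w)
  have i3 := h.int3.const_mul (γ / 2)
  have := integral_eq_zero_of_hasDerivAt_of_integrable h.deriv2 ((i1.add i2).sub i3)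
    (h.int' hc hγ)
  rwa [integral_sub (by exact i1.add i2) i3, integral_add i1 i2, integral_const_mul,
    integral_const_mul, integral_const_mul] at this

lemma integral_pos {g : ℝ → ℝ} (hc : Continuous g) (hg : Integrable g) (h : ∀ x, 0 < g x) :
    0 < ∫ x, g x :=
  integral_pos_of_integrable_nonneg_nonzero (x := 0) hc hg (fun x => (h x).le) (h 0).ne'

/-- The sign behind the theorem. For `w > 0` one combines `3γ - 1 ≥ 2γ` with `moments`. -/
lemma neg (h : IsProfile c w γ f f') (hc : 0 < c) (hγ : 1 ≤ γ) :
    w * (∫ x, f x ^ 2) - (3 * γ - 1) / 4 * (∫ x, f x ^ 3) < 0 := by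
  have m1 := integral_pos h.continuous h.int h.pos
  have m2 : 0 < ∫ x, f x ^ 2 := integral_pos (h.continuous.pow 2) h.int2 fun x => pow_pos (h.pos x) 2
  have m3 : 0 < ∫ x, f x ^ 3 := integral_pos (h.continuous.pow 3) h.int3 fun x => pow_pos (h.pos x) 3
  have hm := h.moments hc hγ
  set M1 := ∫ x, f x
  set M2 := ∫ x, f x ^ 2
  set M3 := ∫ x, f x ^ 3
  rcases le_or_gt w 0 with hw | hw
  · have : w * M2 ≤ 0 := mul_nonpos_of_nonpos_of_nonneg hw m2.le
    have : 0 < (3 * γ - 1) / 4 * M3 := mul_pos (by linarith) m3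
    linarith
  · have := mul_pos hc m1
    have := mul_pos hw m2
    have : 0 ≤ (γ - 1) * M3 := mul_nonneg (by linarith) m3.le
    nlinarith

end IsProfile

/-! ### The functionals evaluated at the solitary wave -/

lemma exists_isProfile (b ω₀ ω₁ : ℝ) (hb : 0 ≤ b) (hΩ : ω₁ ^ 2 < 4 * ω₀) :
    ∃ f', IsProfile (4 * ω₀ - ω₁ ^ 2) ω₁ (gam b) (fun x => phit b ω₀ ω₁ x ^ 2) f' := by
  have hc : 0 < 4 * ω₀ - ω₁ ^ 2 := by linarith
  have hγ : 1 ≤ gam b := by unfold gam; linarith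
  obtain ⟨f', h⟩ := isProfile_cosh (4 * ω₀ - ω₁ ^ 2) ω₁ (gam b) hc hγ
  refine ⟨f', ?_⟩
  convert h using 2 with x
  exact Real.sq_sqrt (h.pos x).le

lemma phit_pos {b ω₀ ω₁ c w γ : ℝ} {f' : ℝ → ℝ}
    (h : IsProfile c w γ (fun x => phit b ω₀ ω₁ x ^ 2) f') (x : ℝ) : 0 < phit b ω₀ ω₁ x :=
  lt_of_le_of_ne (Real.sqrt_nonneg _) fun e => by
    have := h.pos x
    simp [← e] at this

lemma norm_phi {b ω₀ ω₁ c w γ : ℝ} {f' : ℝ → ℝ}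
    (h : IsProfile c w γ (fun x => phit b ω₀ ω₁ x ^ 2) f') (x : ℝ) :
    ‖phi b ω₀ ω₁ x‖ = phit b ω₀ ω₁ x := by
  unfold phi
  rw [norm_mul, Complex.norm_exp, Complex.norm_real, Real.norm_of_nonneg (phit_pos h x).le]
  simp

lemma hasDerivAt_phi {b ω₀ ω₁ c w γ : ℝ} {f' : ℝ → ℝ}
    (h : IsProfile c w γ (fun x => phit b ω₀ ω₁ x ^ 2) f') (x : ℝ) :
    HasDerivAt (phi b ω₀ ω₁)
      (((f' x / (2 * phit b ω₀ ω₁ x) : ℝ) +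
        Complex.I * (phit b ω₀ ω₁ x * (ω₁ / 2 - phit b ω₀ ω₁ x ^ 2 / 4) : ℝ)) *
        Complex.exp (Complex.I * (ω₁ / 2) * x -
          (Complex.I / 4) * ((∫ η in Set.Iic x, (phit b ω₀ ω₁ η) ^ 2) : ℝ))) x := by
  have hp := phit_pos h x
  have hg : HasDerivAt (phit b ω₀ ω₁) (f' x / (2 * phit b ω₀ ω₁ x)) x := by
    have h1 := (h.deriv1 x).sqrt (h.pos x).ne'
    have e : (fun y => √(phit b ω₀ ω₁ y ^ 2)) = phit b ω₀ ω₁ :=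
      funext fun y => Real.sqrt_sq (phit_pos h y).le
    rwa [e, Real.sqrt_sq hp.le] at h1
  have hI : HasDerivAt (fun y => ∫ η in Set.Iic y, (phit b ω₀ ω₁ η) ^ 2)
      (phit b ω₀ ω₁ x ^ 2) x := by
    have e : (fun y => ∫ η in Set.Iic y, (phit b ω₀ ω₁ η) ^ 2) =
        fun y => (∫ η in (0 : ℝ)..y, (phit b ω₀ ω₁ η) ^ 2) +
          ∫ η in Set.Iic (0 : ℝ), (phit b ω₀ ω₁ η) ^ 2 := by
      funext y
      rw [← intervalIntegral.integral_Iic_sub_Iic h.int.integrableOn h.int.integrableOn]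
      ring
    rw [e]
    exact (intervalIntegral.integral_hasDerivAt_right (h.int.intervalIntegrable)
      (h.continuous.stronglyMeasurableAtFilter _ _) h.continuous.continuousAt).add_const _
  have hθ := ((Complex.ofRealCLM.hasDerivAt (x := x)).const_mul (Complex.I * (ω₁ / 2))).sub
    (hI.ofReal_comp.const_mul (Complex.I / 4))
  have := hg.ofReal_comp.mul hθ.cexp
  refine this.congr_deriv ?_
  simp
  ring

section
variable {b ω₀ ω₁ c w γ : ℝ} {f' : ℝ → ℝ}

lemma norm_deriv_phi_sq (h : IsProfile c w γ (fun x => phit b ω₀ ω₁ x ^ 2) f') (x : ℝ) :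
    ‖deriv (phi b ω₀ ω₁) x‖ ^ 2 =
      c / 4 * phit b ω₀ ω₁ x ^ 2 + w / 4 * (phit b ω₀ ω₁ x ^ 2) ^ 2
        - γ / 16 * (phit b ω₀ ω₁ x ^ 2) ^ 3
        + phit b ω₀ ω₁ x ^ 2 * (ω₁ / 2 - phit b ω₀ ω₁ x ^ 2 / 4) ^ 2 := by
  rw [(hasDerivAt_phi h x).deriv, norm_mul, Complex.norm_exp]
  have hp := phit_pos h x
  have hf := h.first x
  have e : ∀ u v : ℝ, ‖(u : ℂ) + Complex.I * (v : ℂ)‖ ^ 2 = u ^ 2 + v ^ 2 := by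
    intro u v
    rw [← Complex.normSq_eq_norm_sq, Complex.normSq_apply]
    simp; ring
  rw [mul_pow, e, div_pow, hf]
  simp
  field_simp
  ring

lemma I_mul_deriv_phi (h : IsProfile c w γ (fun x => phit b ω₀ ω₁ x ^ 2) f') (x : ℝ) :
    Complex.I * deriv (phi b ω₀ ω₁) x * (starRingEnd ℂ) (phi b ω₀ ω₁ x) =
      ((-(ω₁ / 2 * phit b ω₀ ω₁ x ^ 2 - 1 / 4 * (phit b ω₀ ω₁ x ^ 2) ^ 2) : ℝ) : ℂ) +
        ((f' x / 2 : ℝ) : ℂ) * Complex.I := by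
  have hp := phit_pos h x
  rw [(hasDerivAt_phi h x).deriv]
  unfold phi
  set E := Complex.exp (Complex.I * (ω₁ / 2) * x -
          (Complex.I / 4) * ((∫ η in Set.Iic x, (phit b ω₀ ω₁ η) ^ 2) : ℝ)) with hE
  have hEE : E * (starRingEnd ℂ) E = 1 := by
    rw [Complex.mul_conj, Complex.normSq_eq_norm_sq, hE, Complex.norm_exp]
    simp
  have hp' : (phit b ω₀ ω₁ x : ℂ) ≠ 0 := by exact_mod_cast hp.ne'
  rw [map_mul, Complex.conj_ofReal]
  have : ∀ A p : ℂ, Complex.I * (A * E) * (p * (starRingEnd ℂ) E) = Complex.I * A * p := by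
    intro A p
    linear_combination Complex.I * A * p * hEE
  rw [this]
  push_cast
  field_simp
  linear_combination
    2 * (phit b ω₀ ω₁ x : ℂ) ^ 2 * (2 * ω₁ - (phit b ω₀ ω₁ x : ℂ) ^ 2) * Complex.I_sq

end

/-- The quantity `L - 3P - 5b‖φ‖₆⁶` reduced to moments of the squared profile. -/
lemma second_variation_eq (b : ℝ) (hb : 0 ≤ b) (ω₀ ω₁ : ℝ) (hΩ : ω₁ ^ 2 < 4 * ω₀) :
    Lfun ω₀ ω₁ (phi b ω₀ ω₁) - 3 * Pfun (phi b ω₀ ω₁) -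
      5 * b * ∫ x : ℝ, ‖phi b ω₀ ω₁ x‖ ^ 6 =
    ω₁ * (∫ x, (phit b ω₀ ω₁ x ^ 2) ^ 2) -
      (3 * gam b - 1) / 4 * ∫ x, (phit b ω₀ ω₁ x ^ 2) ^ 3 := by
  obtain ⟨f', h⟩ := exists_isProfile b ω₀ ω₁ hb hΩ
  have hc : 0 < 4 * ω₀ - ω₁ ^ 2 := by linarith
  have hγ : 1 ≤ gam b := by unfold gam; linarith
  have i1 := h.int
  have i2 := h.int2
  have i3 := h.int3
  have i' := h.int' hc hγ
  have hm := h.moments hc hγ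
  -- A polynomial without constant term in the squared profile is integrated termwise.
  have key : ∀ p q r : ℝ, Integrable (fun x => p * phit b ω₀ ω₁ x ^ 2 +
        q * (phit b ω₀ ω₁ x ^ 2) ^ 2 + r * (phit b ω₀ ω₁ x ^ 2) ^ 3) ∧
      ∫ x, (p * phit b ω₀ ω₁ x ^ 2 +
        q * (phit b ω₀ ω₁ x ^ 2) ^ 2 + r * (phit b ω₀ ω₁ x ^ 2) ^ 3) =
      p * (∫ x, phit b ω₀ ω₁ x ^ 2) + q * (∫ x, (phit b ω₀ ω₁ x ^ 2) ^ 2) +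
        r * (∫ x, (phit b ω₀ ω₁ x ^ 2) ^ 3) := by
    intro p q r
    have j1 := i1.const_mul p
    have j2 := i2.const_mul q
    have j3 := i3.const_mul r
    refine ⟨(j1.add j2).add j3, ?_⟩
    rw [integral_add (by exact j1.add j2) j3, integral_add j1 j2, integral_const_mul, integral_const_mul,
      integral_const_mul]
  have hre : ∀ u v : ℝ → ℝ, Integrable u → Integrable v →
      (∫ x, ((u x : ℂ) + (v x : ℂ) * Complex.I)).re = ∫ x, u x := by
    intro u v hu hv
    rw [integral_add hu.ofReal (hv.ofReal.mul_const _), integral_mul_const]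
    rw [show (∫ x, (u x : ℂ)) = ((∫ x, u x : ℝ) : ℂ) from integral_ofReal,
      show (∫ x, (v x : ℂ)) = ((∫ x, v x : ℝ) : ℂ) from integral_ofReal]
    simp
  have hN : ∫ x, ‖phi b ω₀ ω₁ x‖ ^ 6 = ∫ x, (phit b ω₀ ω₁ x ^ 2) ^ 3 := by
    congr 1; funext x; rw [norm_phi h]; ring
  have hQ : ∫ x, ‖phi b ω₀ ω₁ x‖ ^ 2 = ∫ x, phit b ω₀ ω₁ x ^ 2 := by
    congr 1; funext x; rw [norm_phi h]
  have hT := (key ((4 * ω₀ - ω₁ ^ 2) / 4 + ω₁ ^ 2 / 4) 0 ((1 - gam b) / 16)).2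
  have hT' : ∫ x, ‖deriv (phi b ω₀ ω₁) x‖ ^ 2 = ∫ x,
      (((4 * ω₀ - ω₁ ^ 2) / 4 + ω₁ ^ 2 / 4) * phit b ω₀ ω₁ x ^ 2 +
        0 * (phit b ω₀ ω₁ x ^ 2) ^ 2 + ((1 - gam b) / 16) * (phit b ω₀ ω₁ x ^ 2) ^ 3) := by
    congr 1; funext x; rw [norm_deriv_phi_sq h]; ring
  have hM := key (-(ω₁ / 2)) (1 / 4) 0
  have hM' : (∫ x : ℝ, Complex.I * deriv (phi b ω₀ ω₁) x *
      (starRingEnd ℂ) (phi b ω₀ ω₁ x)).re = ∫ x, (-(ω₁ / 2) * phit b ω₀ ω₁ x ^ 2 +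
        1 / 4 * (phit b ω₀ ω₁ x ^ 2) ^ 2 + 0 * (phit b ω₀ ω₁ x ^ 2) ^ 3) := by
    rw [← hre _ _ hM.1 (i'.div_const 2)]
    congr 2; funext x; rw [I_mul_deriv_phi h]; push_cast; ring
  have hP := key 0 (-(ω₁ / 2)) (1 / 4)
  have hP' : Pfun (phi b ω₀ ω₁) = ∫ x, (0 * phit b ω₀ ω₁ x ^ 2 +
        -(ω₁ / 2) * (phit b ω₀ ω₁ x ^ 2) ^ 2 + 1 / 4 * (phit b ω₀ ω₁ x ^ 2) ^ 3) := by
    unfold Pfun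
    rw [← hre _ _ hP.1 (h.mul_int (i'.div_const 2))]
    congr 2; funext x
    rw [norm_phi h]
    have := I_mul_deriv_phi h x
    push_cast at this ⊢
    linear_combination (phit b ω₀ ω₁ x : ℂ) ^ 2 * this
  have hb' : b = 3 / 16 * (gam b - 1) := by unfold gam; ring
  unfold Lfun
  rw [hN, hQ, hT', hT, hM', hM.2, hP', hP.2]
  generalize gam b = γ at *
  subst hb'
  linear_combination (1 / 2) * hm

/-! ### Dependence of the action on the scaling parameter -/

lemma Sfun_smul (b ω₀ ω₁ l : ℝ) (v : ℝ → ℂ) :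
    Sfun b ω₀ ω₁ (fun x => (l : ℂ) * v x) =
      l ^ 2 * (Lfun ω₀ ω₁ v / 2) - l ^ 4 * (Pfun v / 4) -
        l ^ 6 * (b / 6 * ∫ x, ‖v x‖ ^ 6) := by
  have hd : deriv (fun x => (l : ℂ) * v x) = fun x => (l : ℂ) * deriv v x := by
    funext x
    exact deriv_const_mul_field _
  have hn : ∀ (n : ℕ) (u : ℝ → ℂ), Even n →
      ∫ x, ‖(l : ℂ) * u x‖ ^ n = l ^ n * ∫ x, ‖u x‖ ^ n := by
    intro n u hn
    rw [← integral_const_mul]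
    congr 1; funext x
    rw [norm_mul, Complex.norm_real, mul_pow, Real.norm_eq_abs, hn.pow_abs]
  have h1 : (∫ x : ℝ, Complex.I * ((l : ℂ) * deriv v x) * (starRingEnd ℂ) ((l : ℂ) * v x)).re =
      l ^ 2 * (∫ x : ℝ, Complex.I * deriv v x * (starRingEnd ℂ) (v x)).re := by
    rw [← Complex.re_ofReal_mul, ← integral_const_mul]
    congr 2; funext x
    rw [map_mul, Complex.conj_ofReal]; push_cast; ring
  have h2 : Pfun (fun x => (l : ℂ) * v x) = l ^ 4 * Pfun v := by
    unfold Pfun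
    rw [hd, ← Complex.re_ofReal_mul, ← integral_const_mul]
    congr 2; funext x
    have : ((‖(l : ℂ) * v x‖ : ℝ) : ℂ) ^ 2 = (l : ℂ) ^ 2 * (‖v x‖ : ℂ) ^ 2 := by
      rw [norm_mul, Complex.norm_real, Real.norm_eq_abs]
      norm_cast
      rw [mul_pow, sq_abs]
    rw [this, map_mul, Complex.conj_ofReal]; push_cast; ring
  unfold Sfun
  rw [h2, hn 6 v (by decide)]
  unfold Lfun
  rw [hd, h1, hn 2 v (by decide), hn 2 (deriv v) (by decide)]
  ring

lemma iteratedDeriv_two_poly (A B C : ℝ) :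
    iteratedDeriv 2 (fun l : ℝ => l ^ 2 * A - l ^ 4 * B - l ^ 6 * C) 1 =
      2 * A - 12 * B - 30 * C := by
  have h1 : deriv (fun l : ℝ => l ^ 2 * A - l ^ 4 * B - l ^ 6 * C) =
      fun l => 2 * l * A - 4 * l ^ 3 * B - 6 * l ^ 5 * C := by
    funext l
    have := ((((hasDerivAt_pow 2 l).mul_const A).sub ((hasDerivAt_pow 4 l).mul_const B)).sub
      ((hasDerivAt_pow 6 l).mul_const C)).deriv
    refine this.trans ?_
    norm_num
  rw [iteratedDeriv_succ, iteratedDeriv_one, h1]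
  have := (((((hasDerivAt_id (1 : ℝ)).const_mul 2).mul_const A).sub
    (((hasDerivAt_pow 3 (1 : ℝ)).const_mul 4).mul_const B)).sub
      (((hasDerivAt_pow 5 (1 : ℝ)).const_mul 6).mul_const C)).deriv
  refine this.trans ?_
  norm_num

theorem stmt17 (b : ℝ) (hb : 0 ≤ b) (ω₀ ω₁ : ℝ) (hΩ : ω₁ ^ 2 < 4 * ω₀) :
    iteratedDeriv 2
        (fun lam : ℝ => Sfun b ω₀ ω₁ (fun x => (lam : ℂ) * phi b ω₀ ω₁ x)) 1 < 0 ∧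
    Lfun ω₀ ω₁ (phi b ω₀ ω₁) - 3 * Pfun (phi b ω₀ ω₁) -
      5 * b * ∫ x : ℝ, ‖phi b ω₀ ω₁ x‖ ^ 6 < 0 := by
  have hneg : Lfun ω₀ ω₁ (phi b ω₀ ω₁) - 3 * Pfun (phi b ω₀ ω₁) -
      5 * b * ∫ x : ℝ, ‖phi b ω₀ ω₁ x‖ ^ 6 < 0 := by
    obtain ⟨f', h⟩ := exists_isProfile b ω₀ ω₁ hb hΩ
    rw [second_variation_eq b hb ω₀ ω₁ hΩ]
    exact h.neg (by linarith) (by unfold gam; linarith)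
  refine ⟨?_, hneg⟩
  simp only [Sfun_smul]
  rw [iteratedDeriv_two_poly]
  linarith

end
end

section
/- Let b > 0, γ = 1 + 16b/3, and let ω̂ = (ω̂₀, ω̂₁) ∈ Ω. Suppose the 2×2 matrix d''(ω̂) whose (j,k) entry is the partial derivative ∂_{ω_j} Q_k(φ_ω) evaluated at ω = ω̂ (j, k ∈ {0,1}) is negative definite. Then there exists a differentiable ψ : ℝ → ℂ with ψ, ψ' square-integrable such that Re ∫_ℝ φ_{ω̂}(x)·conj(ψ(x)) dx = 0, Re ∫_ℝ i·φ_{ω̂}'(x)·conj(ψ(x)) dx = 0, and the second derivative of the map t ↦ S_{ω̂}(φ_{ω̂} + t·ψ) at t = 0 is strictly negative. -/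
open MeasureTheory

noncomputable section

/-!
Write `u = φ̃_ω`, `w = ω₁`, `κ² = 4ω₀ - ω₁²`, `m = κ²/4` and `θ' = w/2 - u²/4`, so that
`φ = u e^{iθ}`. In polar form `v = ρ e^{iα}`, with `β = α' - w/2 + ρ²/4`, the action becomes
`∫ ρ'²/2 + m ρ²/2 + w ρ⁴/8 - γ ρ⁶/32 + β² ρ²/2`: the phase enters only through `β²`.

The direction used is the infinitesimal `L²`-preserving dilation combined with a Galilean boost,
`ψ = φ + 2xφ' + i(c - w)xφ`, that is, `ψ = e^{iθ}(p + i s)` with `p = u + 2xu'` and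
`s = x u (c - u²/2)`. Its first-order variation of `β` is the constant `c`. The dilation makes `ψ`
orthogonal to `φ`, and orthogonality to `iφ'` forces `c = B/(2A)`, where `A = ∫u²`, `B = ∫u⁴`.
The linearized amplitude operator `M` satisfies `M p = -4mu - wu³`, so the second derivative of the
action along `ψ` is `⟨Mp, p⟩ + c²A = -wB/2 + B²/(4A)`, which is negative exactly when `B < 2wA`
(`Profile.core`).

It remains to see that negative definiteness of `d''` gives `B < 2wA`. Both integrals are explicit:
`A = (4/√γ)(π/2 + arctan(w/(√γκ)))` and `γB = 8κ + 2wA`; moreover `Q₀(φ) = A/2` and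
`Q₁(φ) = -wA/4 + B/8`, so `d''` is computed in closed form. Its entry `∂₀Q₀` has the sign of `-w`,
hence `w > 0`, and testing `d''` on the vector `(2ω₀, w)` gives
`(w/(4γ))(4κ - wA(γ-1)) < 0`, which is the inequality `B < 2wA`.

All integrands are polynomials in `x`, `u` and the bounded function `r = u'/u`, and are integrable
because `u` is `Rapid`. Identities between integrals are obtained by exhibiting the difference of
the integrands as the derivative of a `Rapid` function.
-/

/-! ### Rapidly decreasing functions -/

/-- Continuous functions decaying faster than every power of `|x|`; no condition is put on
derivatives. -/
def Rapid (f : ℝ → ℝ) : Prop :=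
  Continuous f ∧ ∀ k : ℕ, ∃ C, ∀ x, |x| ^ k * |f x| ≤ C

namespace Rapid
variable {f g : ℝ → ℝ}

lemma bdd (hf : Rapid f) : ∃ C, ∀ x, |f x| ≤ C := by
  obtain ⟨C, hC⟩ := hf.2 0
  exact ⟨C, fun x => by simpa using hC x⟩

lemma add (hf : Rapid f) (hg : Rapid g) : Rapid (fun x => f x + g x) := by
  refine ⟨hf.1.add hg.1, fun k => ?_⟩
  obtain ⟨C, hC⟩ := hf.2 k
  obtain ⟨D, hD⟩ := hg.2 k
  refine ⟨C + D, fun x => ?_⟩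
  calc |x| ^ k * |f x + g x| ≤ |x| ^ k * (|f x| + |g x|) := by gcongr; exact abs_add_le _ _
    _ ≤ C + D := by linarith [hC x, hD x]

lemma bdd_mul (hg : Rapid g) (hf : Continuous f) (hb : ∃ C, ∀ x, |f x| ≤ C) :
    Rapid (fun x => f x * g x) := by
  refine ⟨hf.mul hg.1, fun k => ?_⟩
  obtain ⟨C, hC⟩ := hb
  obtain ⟨D, hD⟩ := hg.2 k
  refine ⟨C * D, fun x => ?_⟩
  calc |x| ^ k * |f x * g x| = |f x| * (|x| ^ k * |g x|) := by rw [abs_mul]; ring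
    _ ≤ C * D := mul_le_mul (hC x) (hD x) (by positivity) ((abs_nonneg _).trans (hC x))

lemma mul (hf : Rapid f) (hg : Rapid g) : Rapid (fun x => f x * g x) :=
  hg.bdd_mul hf.1 hf.bdd

lemma const_mul (hg : Rapid g) (c : ℝ) : Rapid (fun x => c * g x) :=
  hg.bdd_mul continuous_const ⟨|c|, fun _ => le_rfl⟩

lemma id_mul (hg : Rapid g) : Rapid (fun x => x * g x) := by
  refine ⟨continuous_id.mul hg.1, fun k => ?_⟩
  obtain ⟨C, hC⟩ := hg.2 (k + 1)
  refine ⟨C, fun x => ?_⟩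
  rw [abs_mul, ← mul_assoc, ← pow_succ]; exact hC x

lemma neg (hf : Rapid f) : Rapid (fun x => -f x) := by simpa using hf.const_mul (-1)

lemma sub (hf : Rapid f) (hg : Rapid g) : Rapid (fun x => f x - g x) := by
  simpa [sub_eq_add_neg] using hf.add hg.neg

lemma pow (hf : Rapid f) : ∀ {n : ℕ}, n ≠ 0 → Rapid (fun x => f x ^ n)
  | 0, h => absurd rfl h
  | 1, _ => by simpa using hf
  | n + 2, _ => by
    have := (hf.pow (n := n + 1) (by simp)).mul hf
    simpa [pow_succ] using this

lemma integrable (hf : Rapid f) : Integrable f := by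
  obtain ⟨C, hC⟩ := hf.2 0
  obtain ⟨D, hD⟩ := hf.2 2
  refine (integrable_inv_one_add_sq.const_mul (C + D)).mono' hf.1.aestronglyMeasurable ?_
  refine Filter.Eventually.of_forall fun x => ?_
  have h1 := hC x
  have h2 := hD x
  rw [Real.norm_eq_abs, ← div_eq_mul_inv, le_div_iff₀ (by positivity)]
  rw [sq_abs] at h2
  linarith

lemma tendsto_cocompact (hf : Rapid f) : Filter.Tendsto f (Filter.cocompact ℝ) (nhds 0) := by
  obtain ⟨C, hC⟩ := hf.2 1
  rw [tendsto_zero_iff_abs_tendsto_zero]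
  have h : Filter.Tendsto (fun x : ℝ => C / |x|) (Filter.cocompact ℝ) (nhds 0) :=
    Filter.Tendsto.const_div_atTop (tendsto_norm_cocompact_atTop (E := ℝ)) C
  refine squeeze_zero' (Filter.Eventually.of_forall fun x => abs_nonneg _) ?_ h
  have : ∀ᶠ x : ℝ in Filter.cocompact ℝ, x ≠ 0 := by
    simpa using (isCompact_singleton (x := (0:ℝ))).compl_mem_cocompact
  filter_upwards [this] with x hx
  rw [Function.comp, le_div_iff₀ (abs_pos.2 hx)]
  have := hC x
  rw [pow_one] at this; linarith

end Rapid

/-! ### Second variation of the action in a gauge -/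

lemma iteratedDeriv_two_sextic (a₀ a₁ a₂ a₃ a₄ a₅ a₆ : ℝ) :
    iteratedDeriv 2 (fun t : ℝ => a₀ + a₁ * t + a₂ * t ^ 2 + a₃ * t ^ 3 + a₄ * t ^ 4
      + a₅ * t ^ 5 + a₆ * t ^ 6) 0 = 2 * a₂ := by
  have h1 : deriv (fun t : ℝ => a₀ + a₁ * t + a₂ * t ^ 2 + a₃ * t ^ 3 + a₄ * t ^ 4
      + a₅ * t ^ 5 + a₆ * t ^ 6) = fun t => a₁ + 2 * a₂ * t + 3 * a₃ * t ^ 2 + 4 * a₄ * t ^ 3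
      + 5 * a₅ * t ^ 4 + 6 * a₆ * t ^ 5 := by
    funext t
    have := ((((((hasDerivAt_const t a₀).add ((hasDerivAt_id t).const_mul a₁)).add
      ((hasDerivAt_pow 2 t).const_mul a₂)).add ((hasDerivAt_pow 3 t).const_mul a₃)).add
      ((hasDerivAt_pow 4 t).const_mul a₄)).add ((hasDerivAt_pow 5 t).const_mul a₅)).add
      ((hasDerivAt_pow 6 t).const_mul a₆)
    refine (this.congr_deriv ?_).deriv
    push_cast; ring
  rw [iteratedDeriv_succ, iteratedDeriv_one, h1]
  have := (((((hasDerivAt_const (0:ℝ) a₁).add ((hasDerivAt_id (0:ℝ)).const_mul (2 * a₂))).add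
      ((hasDerivAt_pow 2 (0:ℝ)).const_mul (3 * a₃))).add
      ((hasDerivAt_pow 3 (0:ℝ)).const_mul (4 * a₄))).add
      ((hasDerivAt_pow 4 (0:ℝ)).const_mul (5 * a₅))).add
      ((hasDerivAt_pow 5 (0:ℝ)).const_mul (6 * a₆))
  refine (this.congr_deriv ?_).deriv
  norm_num

lemma re_integral_of_rapid {h : ℝ → ℂ} {F G : ℝ → ℝ} (hF : Rapid F) (hG : Rapid G)
    (e : ∀ x, h x = (F x : ℂ) + (G x : ℂ) * Complex.I) :
    (∫ x, h x).re = ∫ x, F x := by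
  have hi : Integrable h := by
    rw [funext e]
    exact hF.integrable.ofReal.add (hG.integrable.ofReal.mul_const _)
  have := integral_re hi
  simp only [RCLike.re_eq_complex_re] at this
  rw [← this]
  congr 1; funext x; simp [e x]

lemma integral_lin₇ {F₀ F₁ F₂ F₃ F₄ F₅ F₆ : ℝ → ℝ} (h₀ : Rapid F₀) (h₁ : Rapid F₁)
    (h₂ : Rapid F₂) (h₃ : Rapid F₃) (h₄ : Rapid F₄) (h₅ : Rapid F₅) (h₆ : Rapid F₆)
    (a₀ a₁ a₂ a₃ a₄ a₅ a₆ : ℝ) :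
    ∫ x, (a₀ * F₀ x + a₁ * F₁ x + a₂ * F₂ x + a₃ * F₃ x + a₄ * F₄ x + a₅ * F₅ x + a₆ * F₆ x) =
      a₀ * (∫ x, F₀ x) + a₁ * (∫ x, F₁ x) + a₂ * (∫ x, F₂ x) + a₃ * (∫ x, F₃ x)
        + a₄ * (∫ x, F₄ x) + a₅ * (∫ x, F₅ x) + a₆ * (∫ x, F₆ x) := by
  have r₀ := h₀.const_mul a₀
  have r₁ := r₀.add (h₁.const_mul a₁)
  have r₂ := r₁.add (h₂.const_mul a₂)
  have r₃ := r₂.add (h₃.const_mul a₃)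
  have r₄ := r₃.add (h₄.const_mul a₄)
  have r₅ := r₄.add (h₅.const_mul a₅)
  rw [integral_add r₅.integrable (h₆.const_mul a₆).integrable,
    integral_add r₄.integrable (h₅.const_mul a₅).integrable,
    integral_add r₃.integrable (h₄.const_mul a₄).integrable,
    integral_add r₂.integrable (h₃.const_mul a₃).integrable,
    integral_add r₁.integrable (h₂.const_mul a₂).integrable,
    integral_add r₀.integrable (h₁.const_mul a₁).integrable]
  simp only [integral_const_mul]

lemma norm_sq_gauge {z : ℂ} (hz : z * (starRingEnd ℂ) z = 1) (a d : ℝ) :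
    ‖z * ((a : ℂ) + (d : ℂ) * Complex.I)‖ ^ 2 = a ^ 2 + d ^ 2 := by
  have h1 : ‖z‖ ^ 2 = 1 := by
    rw [Complex.mul_conj, Complex.normSq_eq_norm_sq] at hz
    exact_mod_cast hz
  rw [norm_mul, mul_pow, h1, one_mul, ← Complex.normSq_eq_norm_sq, Complex.normSq_add_mul_I]

lemma momentum_gauge {z : ℂ} (hz : z * (starRingEnd ℂ) z = 1) (a d a' d' : ℝ) :
    Complex.I * (z * ((a : ℂ) + (d : ℂ) * Complex.I)) *
      (starRingEnd ℂ) (z * ((a' : ℂ) + (d' : ℂ) * Complex.I)) =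
    ((-(d * a' - a * d') : ℝ) : ℂ) + ((a * a' + d * d' : ℝ) : ℂ) * Complex.I := by
  simp only [map_mul, map_add, Complex.conj_ofReal, Complex.conj_I]
  push_cast
  linear_combination (Complex.I * (a + d * Complex.I) * (a' - d' * Complex.I)) * hz
    + (d * a' - a * d' - d * d' * Complex.I) * Complex.I_sq

/-- The map `t ↦ S_ω(φ + tψ)` is a polynomial of degree six in `t`; its second derivative at `0` is
twice the integral of the coefficient of `t²`. Here `u`, `p + is`, `f₁ + if₂`, `p₁ + ip₂` are the
functions `φ`, `ψ`, `φ'`, `ψ'` with the unimodular factor `e` removed. -/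
lemma secondVariation (b ω₀ ω₁ : ℝ) {e φ ψ : ℝ → ℂ} {u p s f₁ f₂ p₁ p₂ : ℝ → ℝ}
    (he : ∀ x, e x * (starRingEnd ℂ) (e x) = 1)
    (hu : Rapid u) (hp : Rapid p) (hs : Rapid s) (hf₁ : Rapid f₁) (hf₂ : Rapid f₂)
    (hp₁ : Rapid p₁) (hp₂ : Rapid p₂)
    (hφ : ∀ x, φ x = e x * (u x : ℂ))
    (hψ : ∀ x, ψ x = e x * ((p x : ℂ) + (s x : ℂ) * Complex.I))
    (hφ' : ∀ x, HasDerivAt φ (e x * ((f₁ x : ℂ) + (f₂ x : ℂ) * Complex.I)) x)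
    (hψ' : ∀ x, HasDerivAt ψ (e x * ((p₁ x : ℂ) + (p₂ x : ℂ) * Complex.I)) x) :
    iteratedDeriv 2 (fun t : ℝ => Sfun b ω₀ ω₁ (fun x => φ x + (t : ℂ) * ψ x)) 0 =
      2 * ∫ x, (1 / 2 * (p₁ x ^ 2 + p₂ x ^ 2) + ω₀ / 2 * (p x ^ 2 + s x ^ 2)
        - ω₁ / 2 * (p₂ x * p x - p₁ x * s x)
        + 1 / 4 * (u x ^ 2 * (p₂ x * p x - p₁ x * s x)
          + 2 * (u x * p x) * (f₂ x * p x + p₂ x * u x - f₁ x * s x)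
          + (p x ^ 2 + s x ^ 2) * (f₂ x * u x))
        - b / 6 * (3 * (u x ^ 4 * (p x ^ 2 + s x ^ 2)) + 12 * (u x ^ 4 * p x ^ 2))) := by
  -- `|φ + tψ|² = N0 + N1 t + N2 t²` and `Im ((φ + tψ)' conj (φ + tψ)) = W0 + W1 t + W2 t²`
  let N0 := fun x => u x ^ 2
  let N1 := fun x => 2 * (u x * p x)
  let N2 := fun x => p x ^ 2 + s x ^ 2
  let W0 := fun x => f₂ x * u x
  let W1 := fun x => f₂ x * p x + p₂ x * u x - f₁ x * s x
  let W2 := fun x => p₂ x * p x - p₁ x * s x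
  have hN0 : Rapid N0 := hu.pow two_ne_zero
  have hN1 : Rapid N1 := (hu.mul hp).const_mul 2
  have hN2 : Rapid N2 := (hp.pow two_ne_zero).add (hs.pow two_ne_zero)
  have hW0 : Rapid W0 := hf₂.mul hu
  have hW1 : Rapid W1 := ((hf₂.mul hp).add (hp₂.mul hu)).sub (hf₁.mul hs)
  have hW2 : Rapid W2 := (hp₂.mul hp).sub (hp₁.mul hs)
  -- `c0, …, c6` are the coefficients of `1, t, …, t⁶` in the action density
  let c0 := fun x => 1 / 2 * (f₁ x ^ 2 + f₂ x ^ 2) + ω₀ / 2 * N0 x - ω₁ / 2 * W0 x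
    + 1 / 4 * (N0 x * W0 x) - b / 6 * N0 x ^ 3
  let c1 := fun x => (f₁ x * p₁ x + f₂ x * p₂ x) + ω₀ / 2 * N1 x - ω₁ / 2 * W1 x
    + 1 / 4 * (N0 x * W1 x + N1 x * W0 x) - b / 6 * (3 * (N0 x ^ 2 * N1 x))
  let c2 := fun x => 1 / 2 * (p₁ x ^ 2 + p₂ x ^ 2) + ω₀ / 2 * N2 x - ω₁ / 2 * W2 x
    + 1 / 4 * (N0 x * W2 x + N1 x * W1 x + N2 x * W0 x)
    - b / 6 * (3 * (N0 x ^ 2 * N2 x) + 3 * (N0 x * N1 x ^ 2))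
  let c3 := fun x => 1 / 4 * (N1 x * W2 x + N2 x * W1 x)
    - b / 6 * (6 * (N0 x * (N1 x * N2 x)) + N1 x ^ 3)
  let c4 := fun x => 1 / 4 * (N2 x * W2 x) - b / 6 * (3 * (N0 x * N2 x ^ 2) + 3 * (N1 x ^ 2 * N2 x))
  let c5 := fun x => - (b / 6 * (3 * (N1 x * N2 x ^ 2)))
  let c6 := fun x => - (b / 6 * N2 x ^ 3)
  have h0 : Rapid c0 :=
    (((((hf₁.pow two_ne_zero).add (hf₂.pow two_ne_zero)).const_mul _).add (hN0.const_mul _)).sub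
      (hW0.const_mul _)).add ((hN0.mul hW0).const_mul _) |>.sub ((hN0.pow three_ne_zero).const_mul _)
  have h1 : Rapid c1 :=
    ((((hf₁.mul hp₁).add (hf₂.mul hp₂)).add (hN1.const_mul _)).sub
      (hW1.const_mul _)).add (((hN0.mul hW1).add (hN1.mul hW0)).const_mul _) |>.sub
      ((((hN0.pow two_ne_zero).mul hN1).const_mul _).const_mul _)
  have h2 : Rapid c2 :=
    (((((hp₁.pow two_ne_zero).add (hp₂.pow two_ne_zero)).const_mul _).add (hN2.const_mul _)).sub
      (hW2.const_mul _)).add ((((hN0.mul hW2).add (hN1.mul hW1)).add (hN2.mul hW0)).const_mul _)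
      |>.sub (((((hN0.pow two_ne_zero).mul hN2).const_mul _).add
        ((hN0.mul (hN1.pow two_ne_zero)).const_mul _)).const_mul _)
  have h3 : Rapid c3 :=
    (((hN1.mul hW2).add (hN2.mul hW1)).const_mul _).sub
      ((((hN0.mul (hN1.mul hN2)).const_mul _).add (hN1.pow three_ne_zero)).const_mul _)
  have h4 : Rapid c4 :=
    ((hN2.mul hW2).const_mul _).sub ((((hN0.mul (hN2.pow two_ne_zero)).const_mul _).add
      (((hN1.pow two_ne_zero).mul hN2).const_mul _)).const_mul _)
  have h5 : Rapid c5 := (((hN1.mul (hN2.pow two_ne_zero)).const_mul _).const_mul _).neg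
  have h6 : Rapid c6 := ((hN2.pow three_ne_zero).const_mul _).neg
  have key : (fun t : ℝ => Sfun b ω₀ ω₁ (fun x => φ x + (t : ℂ) * ψ x)) =
      fun t : ℝ => (∫ x, c0 x) + (∫ x, c1 x) * t + (∫ x, c2 x) * t ^ 2 + (∫ x, c3 x) * t ^ 3
        + (∫ x, c4 x) * t ^ 4 + (∫ x, c5 x) * t ^ 5 + (∫ x, c6 x) * t ^ 6 := by
    funext t
    have hv : ∀ x, φ x + (t : ℂ) * ψ x =
        e x * (((u x + t * p x : ℝ) : ℂ) + ((t * s x : ℝ) : ℂ) * Complex.I) := by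
      intro x; rw [hφ, hψ]; push_cast; ring
    have hv' : ∀ x, deriv (fun x => φ x + (t : ℂ) * ψ x) x =
        e x * (((f₁ x + t * p₁ x : ℝ) : ℂ) + ((f₂ x + t * p₂ x : ℝ) : ℂ) * Complex.I) := by
      intro x
      have h : HasDerivAt (fun x => φ x + (t : ℂ) * ψ x) _ x :=
        (hφ' x).add ((hψ' x).const_mul (t : ℂ))
      rw [h.deriv]; push_cast; ring
    have hU : Rapid (fun x => u x + t * p x) := hu.add (hp.const_mul t)
    have hV : Rapid (fun x => t * s x) := hs.const_mul t
    have hF : Rapid (fun x => f₁ x + t * p₁ x) := hf₁.add (hp₁.const_mul t)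
    have hG : Rapid (fun x => f₂ x + t * p₂ x) := hf₂.add (hp₂.const_mul t)
    have hN : Rapid (fun x => (u x + t * p x) ^ 2 + (t * s x) ^ 2) :=
      (hU.pow two_ne_zero).add (hV.pow two_ne_zero)
    have hW : Rapid (fun x => -((f₂ x + t * p₂ x) * (u x + t * p x)
        - (f₁ x + t * p₁ x) * (t * s x))) := ((hG.mul hU).sub (hF.mul hV)).neg
    have hZ : Rapid (fun x => (f₁ x + t * p₁ x) * (u x + t * p x)
        + (f₂ x + t * p₂ x) * (t * s x)) := (hF.mul hU).add (hG.mul hV)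
    have i1 : ∀ x, ‖deriv (fun x => φ x + (t : ℂ) * ψ x) x‖ ^ 2 =
        (f₁ x + t * p₁ x) ^ 2 + (f₂ x + t * p₂ x) ^ 2 := fun x => by
      rw [hv', norm_sq_gauge (he x)]
    have i2 : ∀ x, ‖φ x + (t : ℂ) * ψ x‖ ^ 2 = (u x + t * p x) ^ 2 + (t * s x) ^ 2 := fun x => by
      rw [hv, norm_sq_gauge (he x)]
    have i3 : (∫ x, Complex.I * deriv (fun x => φ x + (t : ℂ) * ψ x) x *
        (starRingEnd ℂ) (φ x + (t : ℂ) * ψ x)).re = ∫ x, -((f₂ x + t * p₂ x) * (u x + t * p x)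
        - (f₁ x + t * p₁ x) * (t * s x)) := by
      refine re_integral_of_rapid hW hZ fun x => ?_
      rw [hv', hv, momentum_gauge (he x)]
    have i4 : (∫ x, Complex.I * (‖φ x + (t : ℂ) * ψ x‖ : ℂ) ^ 2 *
        deriv (fun x => φ x + (t : ℂ) * ψ x) x * (starRingEnd ℂ) (φ x + (t : ℂ) * ψ x)).re =
        ∫ x, ((u x + t * p x) ^ 2 + (t * s x) ^ 2) * (-((f₂ x + t * p₂ x) * (u x + t * p x)
        - (f₁ x + t * p₁ x) * (t * s x))) := by
      refine re_integral_of_rapid (hN.mul hW) (hN.mul hZ) fun x => ?_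
      have h := momentum_gauge (he x) (f₁ x + t * p₁ x) (f₂ x + t * p₂ x) (u x + t * p x) (t * s x)
      rw [← hv, ← hv'] at h
      have h2 : (‖φ x + (t : ℂ) * ψ x‖ : ℂ) ^ 2 = (((u x + t * p x) ^ 2 + (t * s x) ^ 2 : ℝ) : ℂ) := by
        rw [← i2 x]; push_cast; rfl
      rw [h2]
      calc _ = (((u x + t * p x) ^ 2 + (t * s x) ^ 2 : ℝ) : ℂ) *
            (Complex.I * deriv (fun x => φ x + (t : ℂ) * ψ x) x *
              (starRingEnd ℂ) (φ x + (t : ℂ) * ψ x)) := by ring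
        _ = _ := by rw [h]; push_cast; ring
    have i5 : ∀ x, ‖φ x + (t : ℂ) * ψ x‖ ^ 6 = ((u x + t * p x) ^ 2 + (t * s x) ^ 2) ^ 3 := fun x => by
      rw [← i2 x]; ring
    simp only [Sfun, Lfun, Pfun, i1, i2, i3, i4, i5]
    have hD := (hF.pow two_ne_zero).add (hG.pow two_ne_zero)
    have hN3 := hN.pow three_ne_zero
    have e1 := integral_lin₇ hD hN hW (hN.mul hW) hN3 hN3 hN3
      (1 / 2) (ω₀ / 2) (ω₁ / 2) (-(1 / 4)) (-(b / 6)) 0 0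
    have e2 := integral_lin₇ h0 h1 h2 h3 h4 h5 h6 1 t (t ^ 2) (t ^ 3) (t ^ 4) (t ^ 5) (t ^ 6)
    have e3 := e1.symm.trans ((integral_congr_ae (Filter.Eventually.of_forall fun x => ?_)).trans e2)
    · linear_combination e3
    · simp only [c0, c1, c2, c3, c4, c5, c6, N0, N1, N2, W0, W1, W2]
      ring
  rw [key, iteratedDeriv_two_sextic]
  congr 2
  funext x
  simp only [c2, N0, N1, N2, W0, W1, W2]
  ring

/-! ### The test direction -/

/-- A decaying solution `u` of `u'² = m u² + (w/4) u⁴ - (γ/16) u⁶`, recorded through its logarithmic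
derivative `r = u'/u`. -/
structure Profile (m w γ : ℝ) (u r : ℝ → ℝ) : Prop where
  rapid : Rapid u
  du : ∀ x, HasDerivAt u (u x * r x) x
  dr : ∀ x, HasDerivAt r (w / 4 * u x ^ 2 - γ / 8 * u x ^ 4) x
  rsq : ∀ x, r x ^ 2 = m + w / 4 * u x ^ 2 - γ / 16 * u x ^ 4

/-- `e = e^{iθ}` is a unimodular function with `θ' = w/2 - u²/4`. -/
structure Gauge (w : ℝ) (u : ℝ → ℝ) (e : ℝ → ℂ) : Prop where
  unit : ∀ x, e x * (starRingEnd ℂ) (e x) = 1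
  de : ∀ x, HasDerivAt e (((w / 2 - u x ^ 2 / 4 : ℝ) : ℂ) * Complex.I * e x) x

lemma Gauge.hasDerivAt_mul {w : ℝ} {u : ℝ → ℝ} {e : ℝ → ℂ} (G : Gauge w u e) {p s : ℝ → ℝ}
    {p' s' x : ℝ} (hp : HasDerivAt p p' x) (hs : HasDerivAt s s' x) :
    HasDerivAt (fun x => e x * ((p x : ℂ) + (s x : ℂ) * Complex.I))
      (e x * (((p' - (w / 2 - u x ^ 2 / 4) * s x : ℝ) : ℂ) +
        ((s' + (w / 2 - u x ^ 2 / 4) * p x : ℝ) : ℂ) * Complex.I)) x := by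
  have h := (G.de x).mul ((hp.ofReal_comp).add ((hs.ofReal_comp).mul_const Complex.I))
  refine h.congr_deriv ?_
  simp only [Pi.add_apply]
  push_cast
  linear_combination (e x * (w / 2 - u x ^ 2 / 4) * s x) * Complex.I_sq

namespace Profile
variable {m w γ : ℝ} {u r : ℝ → ℝ}

lemma cont_r (P : Profile m w γ u r) : Continuous r :=
  continuous_iff_continuousAt.2 fun x => (P.dr x).continuousAt

lemma bdd_r (P : Profile m w γ u r) : ∃ C, ∀ x, |r x| ≤ C := by
  have h : Rapid (fun x => w / 4 * u x ^ 2 - γ / 16 * u x ^ 4) :=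
    ((P.rapid.pow two_ne_zero).const_mul _).sub ((P.rapid.pow four_ne_zero).const_mul _)
  obtain ⟨C, hC⟩ := h.bdd
  refine ⟨m + C + 1, fun x => ?_⟩
  have h1 := (abs_le.1 (hC x)).2
  have h2 := P.rsq x
  rw [← sq_abs] at h2
  nlinarith [sq_nonneg (|r x| - 1 / 2)]

lemma rapid_du (P : Profile m w γ u r) : Rapid (fun x => u x * r x) := by
  simpa only [mul_comm] using P.rapid.bdd_mul P.cont_r P.bdd_r

/-- The profile equation `u'' = m u + (w/2) u³ - (3γ/16) u⁵`. -/
lemma ddu (P : Profile m w γ u r) (x : ℝ) :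
    HasDerivAt (fun x => u x * r x)
      (m * u x + w / 2 * u x ^ 3 - 3 * γ / 16 * u x ^ 5) x := by
  refine ((P.du x).mul (P.dr x)).congr_deriv ?_
  linear_combination u x * P.rsq x

/-- The amplitude component `p = u + 2xu'` of the test direction, the generator of
`L²`-preserving dilations. -/
def amp (u r : ℝ → ℝ) (x : ℝ) : ℝ := u x + 2 * (x * (u x * r x))

/-- The derivative of `amp u r` when `Profile m w γ u r` holds. -/
def ampDeriv (m w γ : ℝ) (u r : ℝ → ℝ) (x : ℝ) : ℝ :=
  3 * (u x * r x) + 2 * (x * (m * u x + w / 2 * u x ^ 3 - 3 * γ / 16 * u x ^ 5))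

/-- The phase component `s = x u (c - u²/2)` of the test direction. -/
def pha (c : ℝ) (u : ℝ → ℝ) (x : ℝ) : ℝ := c * (x * u x) - 1 / 2 * (x * u x ^ 3)

/-- The derivative of `pha c u` when `Profile m w γ u r` holds. -/
def phaDeriv (c : ℝ) (u r : ℝ → ℝ) (x : ℝ) : ℝ :=
  c * u x + c * (x * (u x * r x)) - 1 / 2 * u x ^ 3 - 3 / 2 * (x * (u x ^ 2 * (u x * r x)))

lemma hasDerivAt_amp (P : Profile m w γ u r) (x : ℝ) :
    HasDerivAt (amp u r) (ampDeriv m w γ u r x) x := by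
  refine ((P.du x).add (((hasDerivAt_id x).mul (P.ddu x)).const_mul 2)).congr_deriv ?_
  simp only [ampDeriv, id]; ring

lemma hasDerivAt_pha (P : Profile m w γ u r) (c x : ℝ) :
    HasDerivAt (pha c u) (phaDeriv c u r x) x := by
  refine ((((hasDerivAt_id x).mul (P.du x)).const_mul c).sub
    (((hasDerivAt_id x).mul ((P.du x).pow 3)).const_mul (1 / 2))).congr_deriv ?_
  simp only [phaDeriv, id, Pi.pow_apply]; push_cast; ring

lemma rapid_poly (P : Profile m w γ u r) :
    Rapid (fun x => m * u x + w / 2 * u x ^ 3 - 3 * γ / 16 * u x ^ 5) :=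
  ((P.rapid.const_mul _).add ((P.rapid.pow three_ne_zero).const_mul _)).sub
    ((P.rapid.pow (by norm_num)).const_mul _)

lemma rapid_amp (P : Profile m w γ u r) : Rapid (amp u r) :=
  P.rapid.add (P.rapid_du.id_mul.const_mul 2)

lemma rapid_ampDeriv (P : Profile m w γ u r) : Rapid (ampDeriv m w γ u r) :=
  (P.rapid_du.const_mul 3).add (P.rapid_poly.id_mul.const_mul 2)

lemma rapid_pha (P : Profile m w γ u r) (c : ℝ) : Rapid (pha c u) :=
  (P.rapid.id_mul.const_mul c).sub ((P.rapid.pow three_ne_zero).id_mul.const_mul _)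

lemma rapid_phaDeriv (P : Profile m w γ u r) (c : ℝ) : Rapid (phaDeriv c u r) :=
  (((P.rapid.const_mul c).add (P.rapid_du.id_mul.const_mul c)).sub
    ((P.rapid.pow three_ne_zero).const_mul _)).sub
    (((P.rapid.pow two_ne_zero).mul P.rapid_du).id_mul.const_mul _)

lemma rapid_phase_mul (P : Profile m w γ u r) {f : ℝ → ℝ} (hf : Rapid f) :
    Rapid (fun x => (w / 2 - u x ^ 2 / 4) * f x) := by
  have := (hf.const_mul (w / 2)).sub (((P.rapid.pow two_ne_zero).mul hf).const_mul (1 / 4))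
  convert this using 2
  ring

/-- If `F` differs from `α u² + β u⁴` by the derivative of a rapidly decreasing function, then both
have the same integral. -/
lemma integral_of_deriv {F G : ℝ → ℝ} (hF : Rapid F) (hG : Rapid G) {α β : ℝ}
    (P : Profile m w γ u r)
    (h : ∀ x, HasDerivAt G (F x - (α * u x ^ 2 + β * u x ^ 4)) x) :
    ∫ x, F x = α * (∫ x, u x ^ 2) + β * (∫ x, u x ^ 4) := by
  have h2 := (P.rapid.pow two_ne_zero).const_mul α
  have h4 := (P.rapid.pow four_ne_zero).const_mul β
  have h0 := integral_eq_zero_of_hasDerivAt_of_integrable h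
    (hF.sub (h2.add h4)).integrable hG.integrable
  rw [integral_sub hF.integrable (h2.add h4).integrable,
    integral_add h2.integrable h4.integrable, integral_const_mul, integral_const_mul] at h0
  linarith

/-- If `∫ u⁴ < 2w ∫ u²`, the direction `e (amp + i pha)` with `c = ∫ u⁴ / (2 ∫ u²)` satisfies both
orthogonality conditions and makes the second variation negative. -/
theorem core (b : ℝ) {ω₀ : ℝ} (hγ : γ = 1 + 16 * b / 3) (hω : ω₀ = m + w ^ 2 / 4)
    (P : Profile m w γ u r) {e φ : ℝ → ℂ} (G : Gauge w u e) (hφ : ∀ x, φ x = e x * (u x : ℂ))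
    (hA : 0 < ∫ x, u x ^ 2) (hB : 0 < ∫ x, u x ^ 4)
    (hAB : (∫ x, u x ^ 4) < 2 * w * ∫ x, u x ^ 2) :
    ∃ ψ : ℝ → ℂ, H1 ψ ∧
      (∫ x : ℝ, φ x * (starRingEnd ℂ) (ψ x)).re = 0 ∧
      (∫ x : ℝ, Complex.I * deriv φ x * (starRingEnd ℂ) (ψ x)).re = 0 ∧
      iteratedDeriv 2
        (fun t : ℝ => Sfun b ω₀ w (fun x => φ x + (t : ℂ) * ψ x)) 0 < 0 := by
  set A := ∫ x, u x ^ 2 with hAdef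
  set B := ∫ x, u x ^ 4 with hBdef
  set c := B / (2 * A) with hc
  have hφ' : ∀ x, HasDerivAt φ (e x * (((u x * r x : ℝ) : ℂ)
      + (((w / 2 - u x ^ 2 / 4) * u x : ℝ) : ℂ) * Complex.I)) x := by
    intro x
    have h := G.hasDerivAt_mul (P.du x) (hasDerivAt_const x (0 : ℝ))
    have h' : φ = fun x => e x * ((u x : ℂ) + ((0 : ℝ) : ℂ) * Complex.I) := by
      funext x; simp [hφ]
    rw [h']
    simpa using h
  have hψ' : ∀ x, HasDerivAt (fun x => e x * ((amp u r x : ℂ) + (pha c u x : ℂ) * Complex.I))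
      (e x * (((ampDeriv m w γ u r x - (w / 2 - u x ^ 2 / 4) * pha c u x : ℝ) : ℂ) +
        ((phaDeriv c u r x + (w / 2 - u x ^ 2 / 4) * amp u r x : ℝ) : ℂ) * Complex.I)) x :=
    fun x => G.hasDerivAt_mul (P.hasDerivAt_amp x) (P.hasDerivAt_pha c x)
  have hu := P.rapid
  have hp := P.rapid_amp
  have hs := P.rapid_pha c
  have hf₁ := P.rapid_du
  have hf₂ := P.rapid_phase_mul P.rapid
  have hp₁ := P.rapid_ampDeriv.sub (P.rapid_phase_mul hs)
  have hp₂ := (P.rapid_phaDeriv c).add (P.rapid_phase_mul hp)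
  refine ⟨fun x => e x * ((amp u r x : ℂ) + (pha c u x : ℂ) * Complex.I), ⟨?_, ?_, ?_⟩, ?_, ?_, ?_⟩
  · exact fun x => (hψ' x).differentiableAt
  · simp only [norm_sq_gauge (G.unit _)]
    exact ((hp.pow two_ne_zero).add (hs.pow two_ne_zero)).integrable
  · simp only [(hψ' _).deriv, norm_sq_gauge (G.unit _)]
    exact ((hp₁.pow two_ne_zero).add (hp₂.pow two_ne_zero)).integrable
  · rw [re_integral_of_rapid (hu.mul hp) (hu.mul hs).neg]
    · rw [P.integral_of_deriv (hu.mul hp) (hu.pow two_ne_zero).id_mul (α := 0) (β := 0)]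
      · ring
      · intro x
        refine ((hasDerivAt_id x).mul ((P.du x).pow 2)).congr_deriv ?_
        simp only [amp, id, Pi.pow_apply]; push_cast; ring
    · intro x
      rw [hφ]
      simp only [map_mul, map_add, Complex.conj_ofReal, Complex.conj_I]
      push_cast
      linear_combination (u x * (amp u r x - pha c u x * Complex.I)) * G.unit x
  · rw [re_integral_of_rapid ((hf₂.mul hp).sub (hf₁.mul hs)).neg ((hf₁.mul hp).add (hf₂.mul hs))]
    · rw [P.integral_of_deriv ((hf₂.mul hp).sub (hf₁.mul hs)).neg
        (G := fun x => 1 / 2 * (u x * pha c u x) - w / 2 * (x * u x ^ 2) + 1 / 4 * (x * u x ^ 4))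
        (((((hu.mul hs).const_mul _).sub ((hu.pow two_ne_zero).id_mul.const_mul _))).add
          ((hu.pow four_ne_zero).id_mul.const_mul _)) (α := -c / 2) (β := 1 / 4)]
      · rw [hc]; field_simp; ring
      · intro x
        refine (((((P.du x).mul (P.hasDerivAt_pha c x)).const_mul (1 / 2)).sub
          (((hasDerivAt_id x).mul ((P.du x).pow 2)).const_mul (w / 2))).add
          (((hasDerivAt_id x).mul ((P.du x).pow 4)).const_mul (1 / 4))).congr_deriv ?_
        simp only [amp, pha, phaDeriv, id, Pi.pow_apply]; push_cast; ring
    · intro x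
      rw [(hφ' x).deriv, momentum_gauge (G.unit x)]
  · rw [secondVariation b ω₀ w G.unit hu hp hs hf₁ hf₂ hp₁ hp₂ hφ (fun x => rfl) hφ' hψ']
    have hG : Rapid (fun x => 1 / 2 * (amp u r x * ampDeriv m w γ u r x) - 2 * m * (x * u x ^ 2)
        - w / 4 * (x * u x ^ 4) + 1 / 2 * (r x * pha c u x ^ 2)) :=
      (((((hp.mul P.rapid_ampDeriv).const_mul _).sub ((hu.pow two_ne_zero).id_mul.const_mul _)).sub
        ((hu.pow four_ne_zero).id_mul.const_mul _))).add
        (((hs.pow two_ne_zero).bdd_mul P.cont_r P.bdd_r).const_mul _)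
    -- `p p'/2 - 2m x u² - (w/4) x u⁴` comes from integrating `p'²` by parts and from
    -- `p M p = -(4mu + wu³) p`; `r s²/2 = u' (s²/(2u))` comes from the second-order change
    -- `s²/(2u)` of the modulus `|u + t(p + is)|`, tested against the profile equation.
    rw [P.integral_of_deriv ?_ hG (α := c ^ 2 / 2) (β := -w / 4)]
    · rw [← hAdef, ← hBdef]
      have : 2 * (c ^ 2 / 2 * A + -w / 4 * B) = B * (B - 2 * w * A) / (4 * A) := by
        rw [hc]; field_simp; ring
      rw [this]
      exact div_neg_of_neg_of_pos (mul_neg_of_pos_of_neg hB (by linarith)) (by linarith)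
    · intro x
      have ha' : HasDerivAt (ampDeriv m w γ u r)
          (3 * (m * u x + w / 2 * u x ^ 3 - 3 * γ / 16 * u x ^ 5)
            + 2 * ((m * u x + w / 2 * u x ^ 3 - 3 * γ / 16 * u x ^ 5)
              + x * ((m + 3 * w / 2 * u x ^ 2 - 15 * γ / 16 * u x ^ 4) * (u x * r x)))) x := by
        refine (((P.ddu x).const_mul 3).add (((hasDerivAt_id x).mul
          ((((P.du x).const_mul m).add (((P.du x).pow 3).const_mul (w / 2))).sub
            (((P.du x).pow 5).const_mul (3 * γ / 16)))).const_mul 2)).congr_deriv ?_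
        simp only [id, Pi.pow_apply, Pi.add_apply, Pi.sub_apply]; push_cast; ring
      refine (((((((P.hasDerivAt_amp x).mul ha').const_mul (1 / 2)).sub
          (((hasDerivAt_id x).mul ((P.du x).pow 2)).const_mul (2 * m))).sub
          (((hasDerivAt_id x).mul ((P.du x).pow 4)).const_mul (w / 4))).add
          (((P.dr x).mul ((P.hasDerivAt_pha c x).pow 2)).const_mul (1 / 2)))).congr_deriv ?_
      have hr := P.rsq x
      simp only [amp, ampDeriv, pha, phaDeriv, id, Pi.pow_apply]
      push_cast
      subst hω
      have hb : b = 3 * (γ - 1) / 16 := by linarith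
      rw [hb]
      -- both sides have degree two in `r`; the factor of `hr` is the difference of the `r²` coefficients
      linear_combination (2 * x ^ 2 * u x ^ 2 * (m + 3 * w / 2 * u x ^ 2 - 15 * γ / 16 * u x ^ 4)
        + x ^ 2 * (c * u x - u x ^ 3 / 2) * (c * u x - 3 / 2 * u x ^ 3)
        - (x * (c * u x - 3 / 2 * u x ^ 3) + 2 * x * u x * (w / 2 - u x ^ 2 / 4)) ^ 2 / 2
        - 2 * (m + w ^ 2 / 4) * x ^ 2 * u x ^ 2
        + (w * x * u x - x * u x ^ 3 / 2 - x * u x ^ 3) *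
          (x * (c * u x - 3 / 2 * u x ^ 3) + 2 * x * u x * (w / 2 - u x ^ 2 / 4))
        - x * u x ^ 2 * (2 * x * u x ^ 2 * (w / 2 - u x ^ 2 / 4) - u x * (x * (c * u x - u x ^ 3 / 2)))
        - x ^ 2 * u x ^ 4 * (w / 2 - u x ^ 2 / 4)
        + 10 * (3 * (γ - 1) / 16) * x ^ 2 * u x ^ 6) * hr
    · have hN := (hp.pow two_ne_zero).add (hs.pow two_ne_zero)
      have hW := (hp₂.mul hp).sub (hp₁.mul hs)
      exact (((((hp₁.pow two_ne_zero).add (hp₂.pow two_ne_zero)).const_mul _).add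
        (hN.const_mul _)).sub (hW.const_mul _)).add
        (((((hu.pow two_ne_zero).mul hW).add (((hu.mul hp).const_mul 2).mul
          (((hf₂.mul hp).add (hp₂.mul hu)).sub (hf₁.mul hs)))).add
            (hN.mul (hf₂.mul hu))).const_mul _) |>.sub
        (((((hu.pow four_ne_zero).mul hN).const_mul 3).add
          (((hu.pow four_ne_zero).mul (hp.pow two_ne_zero)).const_mul 12)).const_mul _)

end Profile

/-! ### The explicit profile and its integrals -/

section Explicit
open Filter Topology

/-- Constraints on the parameters of the explicit profile: `R = √(w² + γκ²)`. -/
structure Params (κ w γ R : ℝ) : Prop where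
  κ_pos : 0 < κ
  γ_pos : 0 < γ
  R_pos : 0 < R
  R_sq : R ^ 2 = w ^ 2 + γ * κ ^ 2

/-- The denominator `-w + R cosh(κx)` of the squared profile. -/
def solD (κ w R x : ℝ) : ℝ := -w + R * Real.cosh (κ * x)

/-- The profile `u`. -/
def solU (κ w R x : ℝ) : ℝ := Real.sqrt (2 * κ ^ 2 / solD κ w R x)

/-- The logarithmic derivative `u'/u` of the profile. -/
def solR (κ w R x : ℝ) : ℝ := -(κ * R * Real.sinh (κ * x)) / (2 * solD κ w R x)

/-- An antiderivative of `solU ^ 2`. -/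
def solF (κ w γ R x : ℝ) : ℝ :=
  4 / Real.sqrt γ * Real.arctan ((R * Real.exp (κ * x) - w) / (Real.sqrt γ * κ))

namespace Params
variable {κ w γ R : ℝ}

lemma abs_w_lt (H : Params κ w γ R) : |w| < R := by
  have h := H.R_sq
  have h1 : 0 < γ * κ ^ 2 := mul_pos H.γ_pos (pow_pos H.κ_pos 2)
  exact abs_lt_of_sq_lt_sq (by linarith) H.R_pos.le

lemma le_D (_H : Params κ w γ R) (x : ℝ) :
    (R - |w|) * Real.cosh (κ * x) ≤ solD κ w R x := by
  have h1 := Real.one_le_cosh (κ * x)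
  have h2 := le_abs_self w
  have h3 := abs_nonneg w
  unfold solD
  nlinarith

lemma D_pos (H : Params κ w γ R) (x : ℝ) : 0 < solD κ w R x :=
  (mul_pos (sub_pos.2 H.abs_w_lt) (Real.cosh_pos _)).trans_le (H.le_D x)

lemma U_sq (H : Params κ w γ R) (x : ℝ) : solU κ w R x ^ 2 = 2 * κ ^ 2 / solD κ w R x :=
  Real.sq_sqrt (div_nonneg (by positivity) (H.D_pos x).le)

lemma U_pos (H : Params κ w γ R) (x : ℝ) : 0 < solU κ w R x :=
  Real.sqrt_pos.2 (div_pos (by have := H.κ_pos; positivity) (H.D_pos x))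

lemma hasDerivAt_D (x : ℝ) :
    HasDerivAt (solD κ w R) (R * (κ * Real.sinh (κ * x))) x := by
  have h := ((((hasDerivAt_id x).const_mul κ).cosh).const_mul R).const_add (-w)
  refine h.congr_deriv ?_
  simp only [id]; ring

lemma hasDerivAt_U (H : Params κ w γ R) (x : ℝ) :
    HasDerivAt (solU κ w R) (solU κ w R x * solR κ w R x) x := by
  have hD := H.D_pos x
  have hU := H.U_pos x
  have hκ := H.κ_pos
  have h := ((hasDerivAt_const x (2 * κ ^ 2)).div (hasDerivAt_D (w := w) (R := R) (κ := κ) x)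
    hD.ne').sqrt (div_pos (by positivity) hD).ne'
  refine h.congr_deriv ?_
  change _ / (2 * solU κ w R x) = _
  rw [div_eq_iff (by positivity)]
  have : solU κ w R x * solR κ w R x * (2 * solU κ w R x) =
    2 * solU κ w R x ^ 2 * solR κ w R x := by ring
  rw [this, H.U_sq, solR]
  field_simp
  ring

lemma R_sq_eq (H : Params κ w γ R) (x : ℝ) : solR κ w R x ^ 2 =
    κ ^ 2 / 4 + w / 4 * solU κ w R x ^ 2 - γ / 16 * solU κ w R x ^ 4 := by
  have hD := H.D_pos x
  have h4 : solU κ w R x ^ 4 = (2 * κ ^ 2 / solD κ w R x) ^ 2 := by rw [← H.U_sq]; ring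
  rw [h4, H.U_sq, solR]
  have hc : R * Real.cosh (κ * x) = solD κ w R x + w := by unfold solD; ring
  have hs := Real.cosh_sq (κ * x)
  have hR := H.R_sq
  field_simp
  linear_combination 64 * κ ^ 2 * (-R ^ 2 * hs + (R * Real.cosh (κ * x) + solD κ w R x + w) * hc - hR)

lemma hasDerivAt_R (H : Params κ w γ R) (x : ℝ) : HasDerivAt (solR κ w R)
    (w / 4 * solU κ w R x ^ 2 - γ / 8 * solU κ w R x ^ 4) x := by
  have hD := H.D_pos x
  have h4 : solU κ w R x ^ 4 = (2 * κ ^ 2 / solD κ w R x) ^ 2 := by rw [← H.U_sq]; ring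
  have hc : R * Real.cosh (κ * x) = solD κ w R x + w := by unfold solD; ring
  have hs := Real.cosh_sq (κ * x)
  have hR := H.R_sq
  have h := ((((((hasDerivAt_id x).const_mul κ).sinh).const_mul (κ * R))).neg).div
    ((hasDerivAt_D (w := w) (R := R) (κ := κ) x).const_mul 2) (by positivity)
  refine h.congr_deriv ?_
  rw [h4, H.U_sq]
  simp only [id, Pi.neg_apply]
  field_simp
  linear_combination 32 * κ ^ 2 * (-R ^ 2 * hs - hR + (R * Real.cosh (κ * x) + w) * hc)

lemma rapid_U (H : Params κ w γ R) : Rapid (solU κ w R) := by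
  refine ⟨continuous_iff_continuousAt.2 fun x => (H.hasDerivAt_U x).continuousAt, fun k => ?_⟩
  have hκ := H.κ_pos
  have hδ : 0 < R - |w| := sub_pos.2 H.abs_w_lt
  set C := 4 * κ ^ 2 * (2 * k).factorial / (κ ^ (2 * k) * (R - |w|)) with hC
  refine ⟨C + 1, fun x => ?_⟩
  have h1 : (κ * |x|) ^ (2 * k) / (2 * k).factorial ≤ 2 * Real.cosh (κ * x) := by
    refine (Real.pow_div_factorial_le_exp (x := κ * |x|) (by positivity) (2 * k)).trans ?_
    have : κ * |x| = |κ * x| := by rw [abs_mul, abs_of_pos hκ]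
    rw [this, ← Real.cosh_abs, Real.cosh_eq]
    have := Real.exp_pos (-|κ * x|)
    linarith
  have h2 := H.le_D x
  have hD := H.D_pos x
  have h3 : (|x| ^ k * |solU κ w R x|) ^ 2 ≤ C := by
    rw [mul_pow, sq_abs, H.U_sq, ← pow_mul, mul_comm k 2, hC, mul_div_assoc',
      div_le_div_iff₀ hD (by positivity)]
    rw [div_le_iff₀ (by positivity), mul_pow] at h1
    calc |x| ^ (2 * k) * (2 * κ ^ 2) * (κ ^ (2 * k) * (R - |w|))
        = 2 * κ ^ 2 * (R - |w|) * (κ ^ (2 * k) * |x| ^ (2 * k)) := by ring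
      _ ≤ 2 * κ ^ 2 * (R - |w|) * (2 * Real.cosh (κ * x) * (2 * k).factorial) := by gcongr
      _ = 4 * κ ^ 2 * (2 * k).factorial * ((R - |w|) * Real.cosh (κ * x)) := by ring
      _ ≤ _ := by gcongr
  nlinarith [sq_nonneg (|x| ^ k * |solU κ w R x| - 1 / 2)]

lemma profile (H : Params κ w γ R) : Profile (κ ^ 2 / 4) w γ (solU κ w R) (solR κ w R) :=
  ⟨H.rapid_U, H.hasDerivAt_U, H.hasDerivAt_R, H.R_sq_eq⟩

lemma hasDerivAt_F (H : Params κ w γ R) (x : ℝ) :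
    HasDerivAt (solF κ w γ R) (solU κ w R x ^ 2) x := by
  have hD := H.D_pos x
  have hκ := H.κ_pos
  have hR0 := H.R_pos
  have hσ := Real.sqrt_pos.2 H.γ_pos
  have hσ2 := Real.sq_sqrt H.γ_pos.le
  have h := ((((((hasDerivAt_id x).const_mul κ).exp.const_mul R).sub_const w).div_const
    (Real.sqrt γ * κ)).arctan).const_mul (4 / Real.sqrt γ)
  refine h.congr_deriv ?_
  rw [H.U_sq]
  have hE := Real.exp_pos (κ * x)
  have hD2 : 2 * Real.exp (κ * x) * solD κ w R x =
      R * Real.exp (κ * x) ^ 2 - 2 * w * Real.exp (κ * x) + R := by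
    have : Real.exp (κ * x) * Real.exp (-(κ * x)) = 1 := by rw [← Real.exp_add]; simp
    unfold solD; rw [Real.cosh_eq]; linear_combination R * this
  have hRq := H.R_sq
  simp only [id]
  set E := Real.exp (κ * x)
  set σ := Real.sqrt γ
  have hden : (σ * κ) ^ 2 + (R * E - w) ^ 2 = 2 * R * E * solD κ w R x := by
    linear_combination κ ^ 2 * hσ2 - R * hD2 - hRq
  have : 1 + ((R * E - w) / (σ * κ)) ^ 2 = 2 * R * E * solD κ w R x / (σ * κ) ^ 2 := by
    rw [← hden]; field_simp
  rw [this]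
  field_simp
  ring

lemma tendsto_F_atBot (H : Params κ w γ R) : Tendsto (solF κ w γ R) atBot
    (𝓝 (-(4 / Real.sqrt γ * Real.arctan (w / (Real.sqrt γ * κ))))) := by
  have h1 : Tendsto (fun x => Real.exp (κ * x)) atBot (𝓝 0) :=
    Real.tendsto_exp_atBot.comp (tendsto_id.const_mul_atBot H.κ_pos)
  have h2 := ((Real.continuous_arctan.tendsto _).comp
    (((h1.const_mul R).sub_const w).div_const (Real.sqrt γ * κ))).const_mul (4 / Real.sqrt γ)
  refine Eq.subst (motive := fun z => Tendsto (solF κ w γ R) atBot (𝓝 z)) ?_ h2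
  rw [mul_zero, zero_sub, neg_div, Real.arctan_neg]; ring

lemma tendsto_F_atTop (H : Params κ w γ R) : Tendsto (solF κ w γ R) atTop
    (𝓝 (4 / Real.sqrt γ * (Real.pi / 2))) := by
  have hσ := Real.sqrt_pos.2 H.γ_pos
  have h1 : Tendsto (fun x => Real.exp (κ * x)) atTop atTop :=
    Real.tendsto_exp_atTop.comp (tendsto_id.const_mul_atTop H.κ_pos)
  have h2 : Tendsto (fun x => (R * Real.exp (κ * x) - w) / (Real.sqrt γ * κ)) atTop atTop :=
    (tendsto_atTop_add_const_right _ (-w) (h1.const_mul_atTop H.R_pos)).atTop_div_const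
      (mul_pos hσ H.κ_pos)
  exact ((tendsto_nhds_of_tendsto_nhdsWithin Real.tendsto_arctan_atTop).comp h2).const_mul _

/-- `A = ∫ u² = (4/√γ)(π/2 + arctan(w/(√γ κ)))`. -/
lemma integral_U_sq (H : Params κ w γ R) : ∫ x, solU κ w R x ^ 2 =
    4 / Real.sqrt γ * (Real.pi / 2 + Real.arctan (w / (Real.sqrt γ * κ))) := by
  rw [integral_of_hasDerivAt_of_tendsto H.hasDerivAt_F (H.rapid_U.pow two_ne_zero).integrable
    H.tendsto_F_atBot H.tendsto_F_atTop]
  ring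

/-- `|u'/u| → κ/2` at infinity, since `u'/u` squared is `κ²/4` plus terms that vanish with `u`. -/
lemma tendsto_R_sq (H : Params κ w γ R) {l : Filter ℝ} (hl : l ≤ cocompact ℝ) :
    Tendsto (fun x => Real.sqrt (solR κ w R x ^ 2)) l (𝓝 (κ / 2)) := by
  have hU := H.rapid_U.tendsto_cocompact.mono_left hl
  have h := ((((hU.pow 2).const_mul (w / 4)).sub ((hU.pow 4).const_mul (γ / 16))).const_add
    (κ ^ 2 / 4)).sqrt
  have e : Real.sqrt (κ ^ 2 / 4 + (w / 4 * 0 ^ 2 - γ / 16 * 0 ^ 4)) = κ / 2 := by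
    rw [show κ ^ 2 / 4 + (w / 4 * 0 ^ 2 - γ / 16 * 0 ^ 4) = (κ / 2) ^ 2 by ring]
    exact Real.sqrt_sq (by linarith [H.κ_pos])
  rw [e] at h
  refine h.congr fun x => ?_
  rw [H.R_sq_eq]; ring_nf

/-- `B = ∫ u⁴ = (8κ + 2wA)/γ`, by integrating `(u'/u)' = (w/4) u² - (γ/8) u⁴`. -/
lemma integral_U_four (H : Params κ w γ R) : ∫ x, solU κ w R x ^ 4 =
    (8 * κ + 2 * w * ∫ x, solU κ w R x ^ 2) / γ := by
  have hκ := H.κ_pos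
  have hR := H.R_pos
  have h2 := (H.rapid_U.pow two_ne_zero).const_mul (w / 4)
  have h4 := (H.rapid_U.pow four_ne_zero).const_mul (γ / 8)
  have ht : Tendsto (solR κ w R) atTop (𝓝 (-(κ / 2))) := by
    refine (H.tendsto_R_sq atTop_le_cocompact).neg.congr' ?_
    filter_upwards [eventually_ge_atTop 0] with x hx
    have hs : 0 ≤ Real.sinh (κ * x) := Real.sinh_nonneg_iff.2 (by positivity)
    have hD := H.D_pos x
    have : solR κ w R x ≤ 0 := by
      rw [solR, neg_div]; exact neg_nonpos.2 (by positivity)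
    rw [Real.sqrt_sq_eq_abs, abs_of_nonpos this, neg_neg]
  have hbt : Tendsto (solR κ w R) atBot (𝓝 (κ / 2)) := by
    refine (H.tendsto_R_sq atBot_le_cocompact).congr' ?_
    filter_upwards [eventually_le_atBot 0] with x hx
    have hs : Real.sinh (κ * x) ≤ 0 :=
      Real.sinh_nonpos_iff.2 (mul_nonpos_of_nonneg_of_nonpos hκ.le hx)
    have hD := H.D_pos x
    have : 0 ≤ solR κ w R x := by
      rw [solR]
      refine div_nonneg ?_ (by positivity)
      have : 0 < κ * R := by positivity
      nlinarith
    rw [Real.sqrt_sq_eq_abs, abs_of_nonneg this]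
  have h := integral_of_hasDerivAt_of_tendsto H.hasDerivAt_R (h2.sub h4).integrable hbt ht
  rw [integral_sub h2.integrable h4.integrable, integral_const_mul, integral_const_mul] at h
  have := H.γ_pos
  field_simp
  linarith

end Params
end Explicit

/-! ### Charges of the solitary waves and their derivatives -/

section Solitary
open Filter Topology

/-- `κ = √(4ω₀ - ω₁²)`. -/
def kap (ω₀ ω₁ : ℝ) : ℝ := Real.sqrt (4 * ω₀ - ω₁ ^ 2)

/-- `R = √(ω₁² + γ(4ω₀ - ω₁²))`. -/
def rad (b ω₀ ω₁ : ℝ) : ℝ := Real.sqrt (ω₁ ^ 2 + gam b * (4 * ω₀ - ω₁ ^ 2))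

variable {b ω₀ ω₁ : ℝ}

lemma kap_sq (hΩ : ω₁ ^ 2 < 4 * ω₀) : kap ω₀ ω₁ ^ 2 = 4 * ω₀ - ω₁ ^ 2 :=
  Real.sq_sqrt (by linarith)

lemma one_lt_gam (hb : 0 < b) : 1 < gam b := by unfold gam; linarith

lemma params (hb : 0 < b) (hΩ : ω₁ ^ 2 < 4 * ω₀) :
    Params (kap ω₀ ω₁) ω₁ (gam b) (rad b ω₀ ω₁) := by
  have hg := one_lt_gam hb
  have h : 0 < ω₁ ^ 2 + gam b * (4 * ω₀ - ω₁ ^ 2) :=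
    add_pos_of_nonneg_of_pos (sq_nonneg _) (mul_pos (by linarith) (by linarith))
  exact ⟨Real.sqrt_pos.2 (by linarith), by linarith, Real.sqrt_pos.2 h, by
    rw [kap_sq hΩ]; exact Real.sq_sqrt h.le⟩

lemma phit_eq (hΩ : ω₁ ^ 2 < 4 * ω₀) :
    phit b ω₀ ω₁ = solU (kap ω₀ ω₁) ω₁ (rad b ω₀ ω₁) := by
  funext x
  rw [solU, kap_sq hΩ]
  rfl

/-- The phase factor `e^{iθ}` of `φ_ω`. -/
def solPhase (b ω₀ ω₁ x : ℝ) : ℂ :=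
  Complex.exp (((ω₁ / 2 * x - 1 / 4 * ∫ η in Set.Iic x, phit b ω₀ ω₁ η ^ 2 : ℝ) : ℂ) * Complex.I)

lemma phi_eq (x : ℝ) : phi b ω₀ ω₁ x = solPhase b ω₀ ω₁ x * (phit b ω₀ ω₁ x : ℂ) := by
  rw [phi, solPhase, mul_comm]
  congr 2
  push_cast; ring

lemma gauge_spec (hb : 0 < b) (hΩ : ω₁ ^ 2 < 4 * ω₀) :
    Gauge ω₁ (phit b ω₀ ω₁) (solPhase b ω₀ ω₁) := by
  have H := params hb hΩ
  have hI : ∀ x, ∫ η in Set.Iic x, phit b ω₀ ω₁ η ^ 2 =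
      solF (kap ω₀ ω₁) ω₁ (gam b) (rad b ω₀ ω₁) x -
        -(4 / Real.sqrt (gam b) * Real.arctan (ω₁ / (Real.sqrt (gam b) * kap ω₀ ω₁))) := by
    intro x
    rw [phit_eq hΩ]
    exact integral_Iic_of_hasDerivAt_of_tendsto' (fun y _ => H.hasDerivAt_F y)
      (H.rapid_U.pow two_ne_zero).integrable.integrableOn H.tendsto_F_atBot
  refine ⟨fun x => ?_, fun x => ?_⟩
  · rw [Complex.mul_conj, Complex.normSq_eq_norm_sq, solPhase, Complex.norm_exp_ofReal_mul_I]
    simp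
  · have h : HasDerivAt (fun x => ω₁ / 2 * x - 1 / 4 * ∫ η in Set.Iic x, phit b ω₀ ω₁ η ^ 2)
        (ω₁ / 2 - phit b ω₀ ω₁ x ^ 2 / 4) x := by
      simp only [hI]
      refine (((hasDerivAt_id x).const_mul (ω₁ / 2)).sub
        (((H.hasDerivAt_F x).sub_const _).const_mul (1 / 4))).congr_deriv ?_
      rw [phit_eq hΩ]; ring
    refine ((h.ofReal_comp.mul_const Complex.I).cexp).congr_deriv ?_
    rw [solPhase]; ring

lemma profile_phit (hb : 0 < b) (hΩ : ω₁ ^ 2 < 4 * ω₀) :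
    Profile (kap ω₀ ω₁ ^ 2 / 4) ω₁ (gam b) (phit b ω₀ ω₁)
      (solR (kap ω₀ ω₁) ω₁ (rad b ω₀ ω₁)) := by
  rw [phit_eq hΩ]; exact (params hb hΩ).profile

/-- Closed form of the mass `∫ φ̃²`. -/
def massA (b ω₀ ω₁ : ℝ) : ℝ :=
  4 / Real.sqrt (gam b) * (Real.pi / 2 + Real.arctan (ω₁ / (Real.sqrt (gam b) * kap ω₀ ω₁)))

/-- Closed form of `∫ φ̃⁴`. -/
def quarB (b ω₀ ω₁ : ℝ) : ℝ := (8 * kap ω₀ ω₁ + 2 * ω₁ * massA b ω₀ ω₁) / gam b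

lemma integral_sq (hb : 0 < b) (hΩ : ω₁ ^ 2 < 4 * ω₀) :
    ∫ x, phit b ω₀ ω₁ x ^ 2 = massA b ω₀ ω₁ := by
  rw [phit_eq hΩ]; exact (params hb hΩ).integral_U_sq

lemma integral_four (hb : 0 < b) (hΩ : ω₁ ^ 2 < 4 * ω₀) :
    ∫ x, phit b ω₀ ω₁ x ^ 4 = quarB b ω₀ ω₁ := by
  have := (params hb hΩ).integral_U_four
  rw [← phit_eq hΩ, integral_sq hb hΩ] at this
  exact this

lemma Q0_phi (hb : 0 < b) (hΩ : ω₁ ^ 2 < 4 * ω₀) :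
    Q0 (phi b ω₀ ω₁) = massA b ω₀ ω₁ / 2 := by
  have G := gauge_spec hb hΩ
  have h : ∀ x, ‖phi b ω₀ ω₁ x‖ ^ 2 = phit b ω₀ ω₁ x ^ 2 := fun x => by
    have := norm_sq_gauge (G.unit x) (phit b ω₀ ω₁ x) 0
    simpa [phi_eq] using this
  rw [Q0, funext h, integral_sq hb hΩ]; ring

lemma Q1_phi (hb : 0 < b) (hΩ : ω₁ ^ 2 < 4 * ω₀) :
    Q1 (phi b ω₀ ω₁) = -ω₁ / 4 * massA b ω₀ ω₁ + quarB b ω₀ ω₁ / 8 := by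
  have G := gauge_spec hb hΩ
  have P := profile_phit hb hΩ
  have hu := P.rapid
  have hf₂ := P.rapid_phase_mul hu
  have hphi : phi b ω₀ ω₁ = fun x => solPhase b ω₀ ω₁ x *
      ((phit b ω₀ ω₁ x : ℂ) + ((0 : ℝ) : ℂ) * Complex.I) := by
    funext x; simp [phi_eq]
  rw [Q1, re_integral_of_rapid (hf₂.mul hu).neg (P.rapid_du.mul hu)]
  · have h2 := (hu.pow two_ne_zero).const_mul (-ω₁ / 2)
    have h4 := (hu.pow four_ne_zero).const_mul (1 / 4)
    have : (fun x => -((ω₁ / 2 - phit b ω₀ ω₁ x ^ 2 / 4) * phit b ω₀ ω₁ x * phit b ω₀ ω₁ x)) =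
        fun x => -ω₁ / 2 * phit b ω₀ ω₁ x ^ 2 + 1 / 4 * phit b ω₀ ω₁ x ^ 4 := by
      funext x; ring
    rw [this, integral_add h2.integrable h4.integrable, integral_const_mul, integral_const_mul,
      integral_sq hb hΩ, integral_four hb hΩ]
    ring
  · intro x
    have hd := G.hasDerivAt_mul (P.du x) (hasDerivAt_const x (0 : ℝ))
    rw [hphi, hd.deriv, momentum_gauge (G.unit x)]
    push_cast; ring

lemma hasDerivAt_kap_zero (hΩ : ω₁ ^ 2 < 4 * ω₀) :
    HasDerivAt (fun t => kap t ω₁) (2 / kap ω₀ ω₁) ω₀ := by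
  have h := (((hasDerivAt_id ω₀).const_mul 4).sub_const (ω₁ ^ 2)).sqrt
    (by simp only [id]; linarith)
  refine h.congr_deriv ?_
  simp only [id]
  change 4 * 1 / (2 * kap ω₀ ω₁) = _
  rw [mul_one, show (4 : ℝ) = 2 * 2 by norm_num, mul_div_mul_left _ _ two_ne_zero]

lemma hasDerivAt_kap_one (hΩ : ω₁ ^ 2 < 4 * ω₀) :
    HasDerivAt (fun t => kap ω₀ t) (-ω₁ / kap ω₀ ω₁) ω₁ := by
  have h := ((hasDerivAt_pow 2 ω₁).const_sub (4 * ω₀)).sqrt (by linarith)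
  refine h.congr_deriv ?_
  change -(_) / (2 * kap ω₀ ω₁) = _
  rw [show -(((2 : ℕ) : ℝ) * ω₁ ^ (2 - 1)) = 2 * -ω₁ by norm_num,
    mul_div_mul_left _ _ two_ne_zero]

/-- Chain rule for the closed form of the mass along a curve `s ↦ (g s, f s)` of parameters. -/
lemma hasDerivAt_massA_comp (hb : 0 < b) (hΩ : ω₁ ^ 2 < 4 * ω₀) {f g : ℝ → ℝ} {t f' k' : ℝ}
    (h0 : g t = ω₀) (h1 : f t = ω₁) (hf : HasDerivAt f f' t)
    (hk : HasDerivAt (fun s => kap (g s) (f s)) k' t) :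
    HasDerivAt (fun s => massA b (g s) (f s))
      (4 * (f' * kap ω₀ ω₁ - ω₁ * k') / rad b ω₀ ω₁ ^ 2) t := by
  subst h0 h1
  have H := params hb hΩ
  have hκ := H.κ_pos
  have hR := H.R_pos
  have hσ := Real.sqrt_pos.2 H.γ_pos
  have hσ2 := Real.sq_sqrt H.γ_pos.le
  have h := (((hf.div (hk.const_mul (Real.sqrt (gam b))) (by positivity)).arctan.const_add
    (Real.pi / 2)).const_mul (4 / Real.sqrt (gam b)))
  refine h.congr_deriv ?_
  have hRq := H.R_sq
  simp only [Pi.div_apply]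
  rw [hRq]
  generalize Real.sqrt (gam b) = σ at *
  rw [← hσ2]
  field_simp
  ring

lemma eventually_zero (hΩ : ω₁ ^ 2 < 4 * ω₀) : ∀ᶠ t in 𝓝 ω₀, ω₁ ^ 2 < 4 * t :=
  (continuous_const.mul continuous_id).continuousAt.eventually_const_lt hΩ

lemma eventually_one (hΩ : ω₁ ^ 2 < 4 * ω₀) : ∀ᶠ t in 𝓝 ω₁, t ^ 2 < 4 * ω₀ :=
  (continuous_pow 2).continuousAt.eventually_lt_const hΩ

lemma massA_deriv_zero (hb : 0 < b) (hΩ : ω₁ ^ 2 < 4 * ω₀) :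
    HasDerivAt (fun t => massA b t ω₁) (-8 * ω₁ / (kap ω₀ ω₁ * rad b ω₀ ω₁ ^ 2)) ω₀ := by
  have H := params hb hΩ
  have hκ := H.κ_pos
  have hR := H.R_pos
  have h := hasDerivAt_massA_comp hb hΩ (g := fun s => s) (f := fun _ => ω₁) rfl rfl
    (hasDerivAt_const ω₀ ω₁) (hasDerivAt_kap_zero hΩ)
  refine h.congr_deriv ?_
  field_simp; ring

lemma massA_deriv_one (hb : 0 < b) (hΩ : ω₁ ^ 2 < 4 * ω₀) :
    HasDerivAt (fun t => massA b ω₀ t) (16 * ω₀ / (kap ω₀ ω₁ * rad b ω₀ ω₁ ^ 2)) ω₁ := by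
  have H := params hb hΩ
  have hκ := H.κ_pos
  have hR := H.R_pos
  have h := hasDerivAt_massA_comp hb hΩ (g := fun _ => ω₀) (f := fun s => s) rfl rfl
    (hasDerivAt_id ω₁) (hasDerivAt_kap_one hΩ)
  refine h.congr_deriv ?_
  have hk := kap_sq hΩ
  field_simp
  linear_combination 4 * hk

lemma deriv_Q0_zero (hb : 0 < b) (hΩ : ω₁ ^ 2 < 4 * ω₀) :
    deriv (fun t => Q0 (phi b t ω₁)) ω₀ = -4 * ω₁ / (kap ω₀ ω₁ * rad b ω₀ ω₁ ^ 2) := by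
  have h : (fun t => Q0 (phi b t ω₁)) =ᶠ[𝓝 ω₀] fun t => massA b t ω₁ / 2 := by
    filter_upwards [eventually_zero hΩ] with t ht using Q0_phi hb ht
  rw [h.deriv_eq, ((massA_deriv_zero hb hΩ).div_const 2).deriv]
  ring

lemma deriv_Q0_one (hb : 0 < b) (hΩ : ω₁ ^ 2 < 4 * ω₀) :
    deriv (fun t => Q0 (phi b ω₀ t)) ω₁ = 8 * ω₀ / (kap ω₀ ω₁ * rad b ω₀ ω₁ ^ 2) := by
  have h : (fun t => Q0 (phi b ω₀ t)) =ᶠ[𝓝 ω₁] fun t => massA b ω₀ t / 2 := by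
    filter_upwards [eventually_one hΩ] with t ht using Q0_phi hb ht
  rw [h.deriv_eq, ((massA_deriv_one hb hΩ).div_const 2).deriv]
  ring

lemma deriv_Q1_zero (hb : 0 < b) (hΩ : ω₁ ^ 2 < 4 * ω₀) :
    deriv (fun t => Q1 (phi b t ω₁)) ω₀ = 8 * ω₀ / (kap ω₀ ω₁ * rad b ω₀ ω₁ ^ 2) := by
  have H := params hb hΩ
  have hκ := H.κ_pos
  have hR := H.R_pos
  have hγ := H.γ_pos
  have h : (fun t => Q1 (phi b t ω₁)) =ᶠ[𝓝 ω₀]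
      fun t => -ω₁ / 4 * massA b t ω₁ + quarB b t ω₁ / 8 := by
    filter_upwards [eventually_zero hΩ] with t ht using Q1_phi hb ht
  have hA := massA_deriv_zero hb hΩ
  have hB := (((hasDerivAt_kap_zero hΩ).const_mul 8).add (hA.const_mul (2 * ω₁))).div_const (gam b)
  have hq := (hA.const_mul (-ω₁ / 4)).add (hB.div_const 8)
  rw [h.deriv_eq]
  refine hq.deriv.trans ?_
  have hk := kap_sq hΩ
  have hRq := H.R_sq
  have hpos : 0 < ω₁ ^ 2 + gam b * kap ω₀ ω₁ ^ 2 := by positivity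
  rw [hRq, show 8 * ω₀ = 2 * (kap ω₀ ω₁ ^ 2 + ω₁ ^ 2) by rw [hk]; ring]
  field_simp
  ring

lemma deriv_Q1_one (hb : 0 < b) (hΩ : ω₁ ^ 2 < 4 * ω₀) :
    deriv (fun t => Q1 (phi b ω₀ t)) ω₁ =
      -(massA b ω₀ ω₁ / 4) * (1 - 1 / gam b) - ω₁ / (gam b * kap ω₀ ω₁)
        - 4 * ω₁ * ω₀ / (kap ω₀ ω₁ * rad b ω₀ ω₁ ^ 2) * (1 - 1 / gam b) := by
  have H := params hb hΩ
  have hκ := H.κ_pos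
  have hR := H.R_pos
  have hγ := H.γ_pos
  have h : (fun t => Q1 (phi b ω₀ t)) =ᶠ[𝓝 ω₁]
      fun t => -t / 4 * massA b ω₀ t + quarB b ω₀ t / 8 := by
    filter_upwards [eventually_one hΩ] with t ht using Q1_phi hb ht
  have hA := massA_deriv_one hb hΩ
  have hB := (((hasDerivAt_kap_one hΩ).const_mul 8).add
    (((hasDerivAt_id ω₁).const_mul 2).mul hA)).div_const (gam b)
  have hq := (((hasDerivAt_id ω₁).neg.div_const 4).mul hA).add (hB.div_const 8)
  rw [h.deriv_eq]
  refine hq.deriv.trans ?_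
  simp only [id, Pi.neg_apply]
  field_simp
  ring

lemma massA_pos (hb : 0 < b) : 0 < massA b ω₀ ω₁ := by
  have := Real.sqrt_pos.2 (zero_lt_one.trans (one_lt_gam hb))
  refine mul_pos (by positivity) ?_
  linarith [Real.neg_pi_div_two_lt_arctan (ω₁ / (Real.sqrt (gam b) * kap ω₀ ω₁))]

end Solitary

theorem stmt18 (b : ℝ) (hb : 0 < b) (ω₀ ω₁ : ℝ) (hΩ : ω₁ ^ 2 < 4 * ω₀)
    (hneg : ∀ z : Fin 2 → ℝ, z ≠ 0 →
      z 0 * deriv (fun t => Q0 (phi b t ω₁)) ω₀ * z 0 +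
      z 0 * deriv (fun t => Q1 (phi b t ω₁)) ω₀ * z 1 +
      z 1 * deriv (fun t => Q0 (phi b ω₀ t)) ω₁ * z 0 +
      z 1 * deriv (fun t => Q1 (phi b ω₀ t)) ω₁ * z 1 < 0) :
    ∃ ψ : ℝ → ℂ, H1 ψ ∧
      (∫ x : ℝ, phi b ω₀ ω₁ x * (starRingEnd ℂ) (ψ x)).re = 0 ∧
      (∫ x : ℝ, Complex.I * deriv (phi b ω₀ ω₁) x * (starRingEnd ℂ) (ψ x)).re = 0 ∧
      iteratedDeriv 2
        (fun t : ℝ => Sfun b ω₀ ω₁ (fun x => phi b ω₀ ω₁ x + (t : ℂ) * ψ x)) 0 < 0 := by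
  have H := params hb hΩ
  have hκ := H.κ_pos
  have hR := H.R_pos
  have hγ := H.γ_pos
  have hg := one_lt_gam hb
  have hA := massA_pos (ω₀ := ω₀) (ω₁ := ω₁) hb
  have hk := kap_sq hΩ
  have hRq := H.R_sq
  simp only [deriv_Q0_zero hb hΩ, deriv_Q0_one hb hΩ, deriv_Q1_zero hb hΩ,
    deriv_Q1_one hb hΩ] at hneg
  have hw : 0 < ω₁ := by
    have h := hneg ![1, 0] (by simp)
    simp only [Matrix.cons_val_zero, Matrix.cons_val_one, one_mul, mul_one, mul_zero, zero_mul,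
      add_zero] at h
    rw [div_neg_iff] at h
    have : 0 < kap ω₀ ω₁ * rad b ω₀ ω₁ ^ 2 := by positivity
    rcases h with h | h <;> linarith
  have hdet : 4 * kap ω₀ ω₁ < ω₁ * massA b ω₀ ω₁ * (gam b - 1) := by
    -- `(2ω₀, ω₁)` is a negative multiple of `(-∂₁Q₀, ∂₀Q₀)`, on which the form equals `∂₀Q₀`
    -- times the determinant
    have h := hneg ![2 * ω₀, ω₁] (by simp [hw.ne'])
    simp only [Matrix.cons_val_zero, Matrix.cons_val_one] at h
    have hω : ω₀ = (kap ω₀ ω₁ ^ 2 + ω₁ ^ 2) / 4 := by rw [hk]; ring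
    generalize massA b ω₀ ω₁ = A at *
    rw [hRq] at h
    generalize kap ω₀ ω₁ = κ at *
    have hpos : 0 < ω₁ ^ 2 + gam b * κ ^ 2 := by positivity
    subst hω
    have key : ω₁ / (4 * gam b) * (4 * κ - ω₁ * A * (gam b - 1)) < 0 := by
      refine lt_of_eq_of_lt ?_ h
      field_simp
      ring
    have := neg_of_mul_neg_right key (by positivity)
    linarith
  have hB : 0 < quarB b ω₀ ω₁ := by unfold quarB; positivity
  refine (profile_phit hb hΩ).core b rfl (by rw [hk]; ring) (gauge_spec hb hΩ) phi_eq ?_ ?_ ?_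
  · rwa [integral_sq hb hΩ]
  · rwa [integral_four hb hΩ]
  · rw [integral_sq hb hΩ, integral_four hb hΩ, quarB, div_lt_iff₀ hγ]
    linarith

end
end
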